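/- arXiv:1504.08282 — 3 statements merged into one kernel-verified Lean document; each statement's English description precedes it below -/
import Mathlib

section
/- Let Λ be an artin algebra, P the class of finitely generated right Λ-modules of finite projective dimension, and let E be a finitely generated Λ-module with every indecomposable summand Ext-injective in P (so E ∈ P^⊥ ∩ P). If E is a tilting module, then E^⊥ = P^⊥. -/
open CategoryTheory

universe u

/-- The `n`-th Ext group of `A`-modules `M`, `N`. -/
noncomputable abbrev ext {A : Type u} [Ring A] (M N : ModuleCat.{u} A) (n : ℕ) : Type u :=
  ((Ext ℤ (ModuleCat.{u} A) n).obj (Opposite.op M)).obj N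

/-- `Ext^i(N, M) = 0` for all `i > 0`. -/
def ExtVanish {A : Type u} [Ring A] (N M : ModuleCat.{u} A) : Prop :=
  ∀ i, 0 < i → Subsingleton (ext N M i)

/-- `M` has projective dimension at most `n`, i.e. `Ext^i(M, -) = 0` for `i > n`. -/
def pdLE {A : Type u} [Ring A] (M : ModuleCat.{u} A) (n : ℕ) : Prop :=
  ∀ i, n < i → ∀ N : ModuleCat.{u} A, Subsingleton (ext M N i)

/-- The projective dimension of `M`, as an element of `ℕ∞` (`⊤` if infinite). -/
noncomputable def projDim {A : Type u} [Ring A] (M : ModuleCat.{u} A) : ℕ∞ :=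
  sInf {d : ℕ∞ | ∃ n : ℕ, d = n ∧ pdLE M n}

/-- Membership in `𝒫`: finitely generated of finite projective dimension. -/
def InP {A : Type u} [Ring A] (M : ModuleCat.{u} A) : Prop :=
  Module.Finite A M ∧ ∃ n, pdLE M n

/-- The finitistic dimension of `A`. -/
noncomputable def findim (A : Type u) [Ring A] : ℕ∞ :=
  sSup {d : ℕ∞ | ∃ M : ModuleCat.{u} A, InP M ∧ d = projDim M}

/-- `M` is a direct summand of `S`. -/
def IsSummand {A : Type u} [Ring A] (M S : ModuleCat.{u} A) : Prop :=
  ∃ (s : M →ₗ[A] S) (r : S →ₗ[A] M), r ∘ₗ s = LinearMap.id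

/-- `M` belongs to `add 𝒳`: `M` is a direct summand of a finite direct sum of objects of `𝒳`. -/
def InAddOf {A : Type u} [Ring A] (X : ModuleCat.{u} A → Prop) (M : ModuleCat.{u} A) : Prop :=
  ∃ (k : ℕ) (F : Fin k → ModuleCat.{u} A), (∀ i, X (F i)) ∧
    IsSummand M (ModuleCat.of A (DirectSum (Fin k) (fun i => ↥(F i))))

/-- `M` belongs to `Add T`: `M` is a direct summand of an arbitrary direct sum of copies of `T`. -/
def InAdd {A : Type u} [Ring A] (T M : ModuleCat.{u} A) : Prop :=
  ∃ ι : Type u, IsSummand M (ModuleCat.of A (DirectSum ι (fun _ => ↥T)))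

/-- `M ∈ 𝒳^⊥`: `Ext^i(N, M) = 0` for all `N ∈ 𝒳` and `i > 0`. -/
def InPerpOf {A : Type u} [Ring A] (X : ModuleCat.{u} A → Prop) (M : ModuleCat.{u} A) : Prop :=
  ∀ N, X N → ExtVanish N M

/-- `M` is Ext-injective in `𝒫`: `M ∈ 𝒫` and `Ext^1(N, M) = 0` for all `N ∈ 𝒫`. -/
def ExtInjInP {A : Type u} [Ring A] (M : ModuleCat.{u} A) : Prop :=
  InP M ∧ ∀ N : ModuleCat.{u} A, InP N → Subsingleton (ext N M 1)

/-- `M` is splitting injective in `𝒳`: every injective map `M → Y` with `Y ∈ add 𝒳` splits. -/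
def SplittingInjIn {A : Type u} [Ring A] (X : ModuleCat.{u} A → Prop)
    (M : ModuleCat.{u} A) : Prop :=
  ∀ Y : ModuleCat.{u} A, InAddOf X Y → ∀ f : M →ₗ[A] Y, Function.Injective f →
    ∃ r : Y →ₗ[A] M, r ∘ₗ f = LinearMap.id

/-- `0 → M₁ → M₂ → M₃ → 0` is a short exact sequence. -/
def ShortExact {A : Type u} [Ring A] {M₁ M₂ M₃ : ModuleCat.{u} A}
    (f : M₁ →ₗ[A] M₂) (g : M₂ →ₗ[A] M₃) : Prop :=
  Function.Injective f ∧ Function.Exact f g ∧ Function.Surjective g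

/-- `f : XM → M` is a right `𝒳`-approximation of `M`. -/
def IsRightApprox {A : Type u} [Ring A] (X : ModuleCat.{u} A → Prop)
    {XM M : ModuleCat.{u} A} (f : XM →ₗ[A] M) : Prop :=
  X XM ∧ ∀ Y : ModuleCat.{u} A, X Y → ∀ g : Y →ₗ[A] M, ∃ h : Y →ₗ[A] XM, f ∘ₗ h = g

/-- `f : XM → M` is a minimal right `𝒳`-approximation. -/
def IsMinimalRightApprox {A : Type u} [Ring A] (X : ModuleCat.{u} A → Prop)
    {XM M : ModuleCat.{u} A} (f : XM →ₗ[A] M) : Prop :=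
  IsRightApprox X f ∧ ∀ g : XM →ₗ[A] XM, f ∘ₗ g = f → Function.Bijective g

/-- `𝒳` is contravariantly finite in `mod A`. -/
def ContravariantlyFinite {A : Type u} [Ring A] (X : ModuleCat.{u} A → Prop) : Prop :=
  ∀ M : ModuleCat.{u} A, Module.Finite A M →
    ∃ (XM : ModuleCat.{u} A) (f : XM →ₗ[A] M), IsRightApprox X f

/-- `M` is an indecomposable module: nonzero, and its only idempotent endomorphisms
are `0` and the identity. -/
def Indec {A : Type u} [Ring A] (M : ModuleCat.{u} A) : Prop :=
  (¬ Subsingleton M) ∧ ∀ e : M →ₗ[A] M, e ∘ₗ e = e → e = 0 ∨ e = LinearMap.id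

/-- `L` admits a finite coresolution `0 → L → C^0 → ⋯ → C^n → 0` with all `C^i ∈ add T`. -/
def HasAddCoresolution {A : Type u} [Ring A] (T L : ModuleCat.{u} A) : Prop :=
  ∃ (C : ℕ → ModuleCat.{u} A) (d : ∀ i, C i →ₗ[A] C (i+1)) (f : L →ₗ[A] C 0),
    Function.Injective f ∧ Function.Exact f (d 0) ∧
    (∀ i, Function.Exact (d i) (d (i+1))) ∧
    (∀ i, InAddOf (fun X => X = T) (C i)) ∧
    (∃ m, ∀ i, m ≤ i → Subsingleton (C i))

/-- `T` is a tilting `A`-module. -/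
def IsTilting {A : Type u} [Ring A] (T : ModuleCat.{u} A) : Prop :=
  Module.Finite A T ∧ (∃ n, pdLE T n) ∧ ExtVanish T T ∧
    HasAddCoresolution T (ModuleCat.of A A)

/-- `𝒳` is a resolving subcategory of `mod A`. -/
def Resolving {A : Type u} [Ring A] (X : ModuleCat.{u} A → Prop) : Prop :=
  (∀ M : ModuleCat.{u} A, Module.Finite A M → Module.Projective A M → X M) ∧
  (∀ (M₁ M₂ M₃ : ModuleCat.{u} A) (f : M₁ →ₗ[A] M₂) (g : M₂ →ₗ[A] M₃),
      ShortExact f g → X M₁ → X M₃ → X M₂) ∧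
  (∀ (M₁ M₂ M₃ : ModuleCat.{u} A) (f : M₁ →ₗ[A] M₂) (g : M₂ →ₗ[A] M₃),
      ShortExact f g → X M₂ → X M₃ → X M₁)

/-- `F` is a complete irredundant family of representatives of the isomorphism classes of
indecomposable Ext-injective modules in `𝒫`. -/
def IsCompleteExtInjFamily {A : Type u} [Ring A] {ι : Type u}
    (F : ι → ModuleCat.{u} A) : Prop :=
  (∀ i, Indec (F i) ∧ ExtInjInP (F i)) ∧
  (∀ M : ModuleCat.{u} A, Indec M → ExtInjInP M → ∃ i, Nonempty (M ≃ₗ[A] F i)) ∧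
  (∀ i j, Nonempty (F i ≃ₗ[A] F j) → i = j)

/-- `I` is a complete set of pairwise non-isomorphic indecomposable injective modules. -/
def IsCompleteIndecInjFamily {A : Type u} [Ring A] {n : ℕ}
    (I : Fin n → ModuleCat.{u} A) : Prop :=
  (∀ j, Module.Finite A (I j) ∧ Module.Injective A (I j) ∧ Indec (I j)) ∧
  (∀ M : ModuleCat.{u} A, Module.Finite A M → Module.Injective A M → Indec M →
      ∃ j, Nonempty (M ≃ₗ[A] I j)) ∧
  (∀ j k, Nonempty (I j ≃ₗ[A] I k) → j = k)

section ExtVanishing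

universe v w

open Abelian

variable {A : Type v} [Ring A]

/-- The `Ext` groups computed by a projective resolution and those computed in the derived
category vanish simultaneously in positive degrees. -/
theorem subsingleton_ext_iff (N M : ModuleCat.{v} A) (i : ℕ) :
    Subsingleton (ext N M (i + 1)) ↔ Subsingleton (Abelian.Ext N M (i + 1)) := by
  let P := projectiveResolution N
  have h₁ : Subsingleton (ext N M (i + 1)) ↔
      ∀ f : P.complex.X (i + 1) ⟶ M, P.complex.d (i + 2) (i + 1) ≫ f = 0 →
        ∃ g : P.complex.X i ⟶ M, P.complex.d (i + 1) i ≫ g = f := by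
    rw [← ModuleCat.isZero_iff_subsingleton, (P.isoExt (i + 1) M).isZero_iff,
      ← HomologicalComplex.exactAt_iff_isZero_homology,
      HomologicalComplex.exactAt_iff' _ i (i + 1) (i + 2) (by simp) (by simp),
      ShortComplex.moduleCat_exact_iff]
    rfl
  rw [h₁]
  constructor
  · intro h
    refine subsingleton_of_forall_eq 0 fun α => ?_
    obtain ⟨f, hf, rfl⟩ := P.extMk_surjective α (i + 2) rfl
    exact (P.extMk_eq_zero_iff f (i + 2) rfl hf i rfl).2 (h f hf)
  · intro h f hf
    exact (P.extMk_eq_zero_iff f (i + 2) rfl hf i rfl).1 (Subsingleton.elim _ _)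

theorem extVanish_iff (N M : ModuleCat.{v} A) :
    ExtVanish N M ↔ ∀ i, Subsingleton (Abelian.Ext N M (i + 1)) := by
  refine ⟨fun h i => (subsingleton_ext_iff N M i).1 (h _ i.succ_pos), fun h i hi => ?_⟩
  obtain ⟨j, rfl⟩ := Nat.exists_eq_add_one_of_ne_zero hi.ne'
  exact (subsingleton_ext_iff N M j).2 (h j)

namespace CategoryTheory.ShortComplex.ShortExact

variable {C : Type v} [Category.{w} C] [Abelian C] [HasExt.{w} C] {S : ShortComplex C}

theorem subsingleton_ext_X₁_left (hS : S.ShortExact) (Y : C) (n : ℕ)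
    (h₂ : Subsingleton (Abelian.Ext S.X₂ Y n)) (h₃ : Subsingleton (Abelian.Ext S.X₃ Y (n + 1))) :
    Subsingleton (Abelian.Ext S.X₁ Y n) := by
  refine subsingleton_of_forall_eq 0 fun x => ?_
  obtain ⟨y, rfl⟩ := Ext.contravariant_sequence_exact₁ hS Y x (add_comm 1 n)
    (Subsingleton.elim _ _)
  rw [Subsingleton.elim y 0, Ext.comp_zero]

theorem subsingleton_ext_X₃_left (hS : S.ShortExact) (Y : C) (n : ℕ)
    (h₁ : Subsingleton (Abelian.Ext S.X₁ Y n)) (h₂ : Subsingleton (Abelian.Ext S.X₂ Y (n + 1))) :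
    Subsingleton (Abelian.Ext S.X₃ Y (n + 1)) := by
  refine subsingleton_of_forall_eq 0 fun x => ?_
  obtain ⟨y, rfl⟩ := Ext.contravariant_sequence_exact₃ hS Y x (Subsingleton.elim _ _)
    (add_comm 1 n)
  rw [Subsingleton.elim y 0, Ext.comp_zero]

theorem subsingleton_ext_X₁_right (hS : S.ShortExact) (X : C) (n : ℕ)
    (h₃ : Subsingleton (Abelian.Ext X S.X₃ n)) (h₂ : Subsingleton (Abelian.Ext X S.X₂ (n + 1))) :
    Subsingleton (Abelian.Ext X S.X₁ (n + 1)) := by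
  refine subsingleton_of_forall_eq 0 fun x => ?_
  obtain ⟨y, rfl⟩ := Ext.covariant_sequence_exact₁ X hS x (Subsingleton.elim _ _) rfl
  rw [Subsingleton.elim y 0, Ext.zero_comp]

theorem subsingleton_ext_X₃_right (hS : S.ShortExact) (X : C) (n : ℕ)
    (h₂ : Subsingleton (Abelian.Ext X S.X₂ n)) (h₁ : Subsingleton (Abelian.Ext X S.X₁ (n + 1))) :
    Subsingleton (Abelian.Ext X S.X₃ n) := by
  refine subsingleton_of_forall_eq 0 fun x => ?_
  obtain ⟨y, rfl⟩ := Ext.covariant_sequence_exact₃ X hS x rfl (Subsingleton.elim _ _)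
  rw [Subsingleton.elim y 0, Ext.zero_comp]

/-- If `Ext¹(X₃, Y) = 0`, every map `X₁ ⟶ Y` extends to `X₂`. -/
theorem exists_extension (hS : S.ShortExact) (Y : C)
    (h : Subsingleton (Abelian.Ext S.X₃ Y 1)) (φ : S.X₁ ⟶ Y) : ∃ ψ : S.X₂ ⟶ Y, S.f ≫ ψ = φ := by
  obtain ⟨y, hy⟩ := Ext.contravariant_sequence_exact₁ hS Y (Ext.mk₀ φ) (add_zero 1)
    (Subsingleton.elim _ _)
  obtain ⟨ψ, rfl⟩ := (Ext.mk₀_bijective _ _).2 y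
  exact ⟨ψ, (Ext.mk₀_bijective _ _).1 (by rw [← hy, Ext.mk₀_comp_mk₀])⟩

/-- If `X₂` is projective and every map `X₁ ⟶ Y` extends to `X₂`, then `Ext¹(X₃, Y) = 0`. -/
theorem subsingleton_ext_one_of_extension (hS : S.ShortExact) [Projective S.X₂] (Y : C)
    (h : ∀ φ : S.X₁ ⟶ Y, ∃ ψ : S.X₂ ⟶ Y, S.f ≫ ψ = φ) :
    Subsingleton (Abelian.Ext S.X₃ Y 1) := by
  refine subsingleton_of_forall_eq 0 fun x => ?_
  obtain ⟨y, rfl⟩ := Ext.contravariant_sequence_exact₃ hS Y x (Ext.eq_zero_of_projective _)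
    (add_zero 1)
  obtain ⟨φ, rfl⟩ := (Ext.mk₀_bijective _ _).2 y
  obtain ⟨ψ, rfl⟩ := h φ
  rw [← Ext.mk₀_comp_mk₀, hS.extClass_comp_assoc]

/-- If every map `X ⟶ X₃` lifts to `X₂` and `Ext¹(X, X₂) = 0`, then `Ext¹(X, X₁) = 0`. -/
theorem subsingleton_ext_one_of_lift (hS : S.ShortExact) (X : C)
    (h₂ : Subsingleton (Abelian.Ext X S.X₂ 1))
    (h : ∀ φ : X ⟶ S.X₃, ∃ ψ : X ⟶ S.X₂, ψ ≫ S.g = φ) :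
    Subsingleton (Abelian.Ext X S.X₁ 1) := by
  refine subsingleton_of_forall_eq 0 fun x => ?_
  obtain ⟨y, rfl⟩ := Ext.covariant_sequence_exact₁ X hS x (Subsingleton.elim _ _) (zero_add 1)
  obtain ⟨φ, rfl⟩ := (Ext.mk₀_bijective _ _).2 y
  obtain ⟨ψ, rfl⟩ := h φ
  rw [← Ext.mk₀_comp_mk₀, Ext.comp_assoc _ _ _ (add_zero 0) (zero_add 1) (by lia),
    hS.comp_extClass, Ext.comp_zero]

end CategoryTheory.ShortComplex.ShortExact

/-- Over a noetherian ring, vanishing of `Ext` out of a finitely generated module is inherited by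
direct sums of copies of the second argument. -/
theorem subsingleton_ext_finsupp [IsNoetherianRing A] (E : ModuleCat.{v} A) (ι : Type v)
    (N : ModuleCat.{v} A) [Module.Finite A N] (i : ℕ)
    (h : Subsingleton (Abelian.Ext N E (i + 1))) :
    Subsingleton (Abelian.Ext N (ModuleCat.of A (ι →₀ E)) (i + 1)) := by
  classical
  induction i generalizing N with
  | succ i ih =>
    obtain ⟨n, f, hf⟩ := Module.Finite.exists_fin' A N
    have hS := LinearMap.shortExact_shortComplexKer hf
    have : Module.Finite A f.shortComplexKer.X₁ :=
      inferInstanceAs (Module.Finite A (LinearMap.ker f))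
    have hP (Y : ModuleCat.{v} A) (n : ℕ) :
        Subsingleton (Abelian.Ext f.shortComplexKer.X₂ Y (n + 1)) :=
      subsingleton_of_forall_eq 0 fun x => Ext.eq_zero_of_projective x
    exact hS.subsingleton_ext_X₃_left _ _
      (ih f.shortComplexKer.X₁ (hS.subsingleton_ext_X₁_left _ _ (hP _ _) h)) (hP _ _)
  | zero =>
    obtain ⟨n, f, hf⟩ := Module.Finite.exists_fin' A N
    have hS := LinearMap.shortExact_shortComplexKer hf
    refine hS.subsingleton_ext_one_of_extension _ fun φ => ?_
    have hext (k : ι) : ∃ ψ : (Fin n → A) →ₗ[A] E,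
        ψ ∘ₗ (LinearMap.ker f).subtype = Finsupp.lapply k ∘ₗ φ.hom := by
      obtain ⟨ψ, hψ⟩ := hS.exists_extension E h (ModuleCat.ofHom (Finsupp.lapply k ∘ₗ φ.hom))
      exact ⟨ψ.hom, congrArg ModuleCat.Hom.hom hψ⟩
    choose ψ hψ using hext
    obtain ⟨s, hs⟩ := (inferInstance : Module.Finite A (LinearMap.ker f)).fg_top
    let T : Finset ι := s.biUnion fun x => (φ.hom x).support
    have hT (x : LinearMap.ker f) : (φ.hom x).support ⊆ T := by
      have hle : ⊤ ≤ (Finsupp.supported E A (T : Set ι)).comap φ.hom := by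
        rw [← hs, Submodule.span_le]
        intro y hy
        exact Finset.coe_subset.2 (Finset.subset_biUnion_of_mem (fun x => (φ.hom x).support) hy)
      exact Finset.coe_subset.1 (hle (Submodule.mem_top (x := x)))
    refine ⟨ModuleCat.ofHom (∑ k ∈ T, Finsupp.lsingle k ∘ₗ ψ k), ?_⟩
    ext x : 2
    have hx (k : ι) : ψ k x.1 = φ.hom x k := LinearMap.congr_fun (hψ k) x
    change (∑ k ∈ T, Finsupp.lsingle k ∘ₗ ψ k) x.1 = φ.hom x
    simp only [LinearMap.sum_apply, LinearMap.comp_apply, Finsupp.lsingle_apply, hx]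
    rw [← Finsupp.sum_of_support_subset (φ.hom x) (hT x) Finsupp.single (by simp),
      Finsupp.sum_single]

/-- Every module in `add T` is a retract of a finite direct sum of copies of `T`, expressed
through its coordinates. -/
theorem InAddOf.exists_coordinates {T L : ModuleCat.{v} A} (hL : InAddOf (fun X => X = T) L) :
    ∃ (k : ℕ) (p : Fin k → (L →ₗ[A] T)) (q : Fin k → (T →ₗ[A] L)),
      ∑ i, q i ∘ₗ p i = LinearMap.id := by
  obtain ⟨k, F, hF, s, r, hrs⟩ := hL
  obtain rfl : F = fun _ => T := funext hF
  refine ⟨k, fun i => DirectSum.component A (Fin k) (fun _ => T) i ∘ₗ s,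
    fun i => r ∘ₗ DirectSum.lof A (Fin k) (fun _ => T) i, ?_⟩
  ext x
  have hx : ∑ i, DirectSum.lof A (Fin k) (fun _ => T) i
      (DirectSum.component A (Fin k) (fun _ => T) i (s x)) = s x := by
    exact DirectSum.sum_univ_of _
  simpa [← map_sum, hx] using LinearMap.congr_fun hrs x

theorem InAddOf.subsingleton_ext {T L : ModuleCat.{v} A} (hL : InAddOf (fun X => X = T) L)
    (M : ModuleCat.{v} A) (n : ℕ) (h : Subsingleton (Abelian.Ext T M n)) :
    Subsingleton (Abelian.Ext L M n) := by
  obtain ⟨k, p, q, hpq⟩ := hL.exists_coordinates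
  refine subsingleton_of_forall_eq 0 fun x => ?_
  have hid : 𝟙 L = ∑ i, ModuleCat.ofHom (p i) ≫ ModuleCat.ofHom (q i) := by
    ext1
    simpa using hpq.symm
  rw [← Ext.mk₀_id_comp x, hid, Ext.mk₀_sum, Ext.sum_comp]
  refine Finset.sum_eq_zero fun i _ => ?_
  rw [← Ext.mk₀_comp_mk₀, Ext.comp_assoc _ _ _ (add_zero 0) (zero_add n) (by lia),
    Subsingleton.elim ((Ext.mk₀ (ModuleCat.ofHom (q i))).comp x (zero_add n)) 0, Ext.comp_zero]

/-- The canonical map `T^(Hom(T, M)) → M`. -/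
noncomputable def sumEval (T M : ModuleCat.{v} A) : ((T →ₗ[A] M) →₀ T) →ₗ[A] M :=
  Finsupp.lsum ℕ fun φ => φ

theorem sumEval_single (T M : ModuleCat.{v} A) (φ : T →ₗ[A] M) (x : T) :
    sumEval T M (Finsupp.single φ x) = φ x := by
  simp [sumEval]

/-- If the regular module has a finite coresolution by `add T`, then every `M ∈ T^⊥` is generated
by `T`. -/
theorem HasAddCoresolution.sumEval_surjective {T : ModuleCat.{v} A}
    (hT : HasAddCoresolution T (ModuleCat.of A A)) (M : ModuleCat.{v} A)
    (hM : ∀ i, Subsingleton (Abelian.Ext T M (i + 1))) :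
    Function.Surjective (sumEval T M) := by
  obtain ⟨C, d, f, hf, hf0, hd, hC, m, hm⟩ := hT
  let S (i : ℕ) : ShortComplex (ModuleCat.{v} A) :=
    { X₁ := ModuleCat.of A (LinearMap.ker (d i))
      X₂ := C i
      X₃ := ModuleCat.of A (LinearMap.ker (d (i + 1)))
      f := ModuleCat.ofHom (LinearMap.ker (d i)).subtype
      g := ModuleCat.ofHom ((d i).codRestrict _ fun x => (hd i).apply_apply_eq_zero x)
      zero := by
        ext x
        exact x.2 }
  have hS (i : ℕ) : (S i).ShortExact :=
    { exact := (ShortComplex.ShortExact.moduleCat_exact_iff_function_exact _).2 fun y =>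
        ⟨fun hy => ⟨⟨y, congrArg Subtype.val hy⟩, rfl⟩, by
          rintro ⟨x, rfl⟩
          exact Subtype.ext x.2⟩
      mono_f := (ModuleCat.mono_iff_injective _).2 (Submodule.injective_subtype _)
      epi_g := (ModuleCat.epi_iff_surjective _).2 fun y => by
        obtain ⟨x, hx⟩ := (hd i y.1).1 y.2
        exact ⟨x, Subtype.ext hx⟩ }
  have hker (k : ℕ) : ∀ i j, m ≤ i + k →
      Subsingleton (Abelian.Ext (ModuleCat.of A (LinearMap.ker (d i))) M (j + 1)) := by
    induction k with
    | zero =>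
      intro i j hi
      have := hm i hi
      have hz : Limits.IsZero (ModuleCat.of A (LinearMap.ker (d i))) :=
        ModuleCat.isZero_of_subsingleton _
      have := hz.projective
      exact subsingleton_of_forall_eq 0 fun x => Ext.eq_zero_of_projective x
    | succ k ih =>
      intro i j hi
      exact (hS i).subsingleton_ext_X₁_left M (j + 1) ((hC i).subsingleton_ext M _ (hM j))
        (ih (i + 1) (j + 1) (by lia))
  intro y
  let e : A ≃ₗ[A] LinearMap.ker (d 0) :=
    LinearEquiv.ofBijective (f.codRestrict _ fun x => hf0.apply_apply_eq_zero x)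
      ⟨fun a b hab => hf (congrArg Subtype.val hab), fun z => by
        obtain ⟨x, hx⟩ := (hf0 z.1).1 z.2
        exact ⟨x, Subtype.ext hx⟩⟩
  obtain ⟨ψ, hψ⟩ := (hS 0).exists_extension M (hker m 1 0 (by lia))
    (ModuleCat.ofHom (LinearMap.toSpanSingleton A M y ∘ₗ e.symm.toLinearMap))
  have hy : ψ.hom (e 1).1 = y := by
    have := LinearMap.congr_fun (congrArg ModuleCat.Hom.hom hψ) (e 1)
    change ψ.hom (e 1).1 = LinearMap.toSpanSingleton A M y (e.symm (e 1)) at this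
    simpa using this
  obtain ⟨k, p, q, hpq⟩ := (hC 0).exists_coordinates
  refine ⟨∑ i, Finsupp.single (ψ.hom ∘ₗ q i) (p i (e 1).1), ?_⟩
  rw [map_sum, ← hy]
  simp only [sumEval_single, LinearMap.comp_apply, ← map_sum]
  have := LinearMap.congr_fun hpq (e 1).1
  simp only [LinearMap.sum_apply, LinearMap.comp_apply, LinearMap.id_apply] at this
  rw [this]

/-- If `T` is tilting over a noetherian ring and `M ∈ T^⊥`, then the kernel of the canonical map
`T^(Hom(T, M)) → M` lies in `T^⊥`. -/
theorem IsTilting.subsingleton_ext_ker_sumEval [IsNoetherianRing A] {T : ModuleCat.{v} A}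
    (hT : IsTilting T) (M : ModuleCat.{v} A)
    (hM : ∀ i, Subsingleton (Abelian.Ext T M (i + 1))) (i : ℕ) :
    Subsingleton (Abelian.Ext T (ModuleCat.of A (LinearMap.ker (sumEval T M))) (i + 1)) := by
  obtain ⟨_, -, hTT, hres⟩ := hT
  have hS := LinearMap.shortExact_shortComplexKer (hres.sumEval_surjective M hM)
  have h₂ (i : ℕ) := subsingleton_ext_finsupp T (T →ₗ[A] M) T i ((extVanish_iff T T).1 hTT i)
  cases i with
  | zero =>
    refine hS.subsingleton_ext_one_of_lift T (h₂ 0) fun φ =>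
      ⟨ModuleCat.ofHom (Finsupp.lsingle φ.hom), ?_⟩
    ext x
    exact sumEval_single T M φ.hom x
  | succ i => exact hS.subsingleton_ext_X₁_right T (i + 1) (hM i) (h₂ (i + 1))

/-- Dimension shifting along `Add T`-resolutions: if `N` is finitely generated of finite projective
dimension and `T ∈ N^⊥` is tilting, then `T^⊥ ⊆ N^⊥`. -/
theorem IsTilting.extVanish_of_inP [IsNoetherianRing A] {T : ModuleCat.{v} A}
    (hT : IsTilting T) {N : ModuleCat.{v} A} (hN : InP N) (hNT : ExtVanish N T)
    (M : ModuleCat.{v} A) (hM : ExtVanish T M) : ExtVanish N M := by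
  obtain ⟨_, n, hn⟩ := hN
  rw [extVanish_iff] at hNT hM ⊢
  have key (k : ℕ) : ∀ (j : ℕ) (M : ModuleCat.{v} A),
      (∀ i, Subsingleton (Abelian.Ext T M (i + 1))) → n ≤ j + k →
        Subsingleton (Abelian.Ext N M (j + 1)) := by
    induction k with
    | zero => exact fun j M _ hj => (subsingleton_ext_iff N M j).1 (hn _ (by lia) M)
    | succ k ih =>
      intro j M hM hj
      have hS := LinearMap.shortExact_shortComplexKer (hT.2.2.2.sumEval_surjective M hM)
      exact hS.subsingleton_ext_X₃_right N (j + 1) (subsingleton_ext_finsupp T _ N j (hNT j))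
        (ih (j + 1) _ (hT.subsingleton_ext_ker_sumEval M hM) (by lia))
  exact fun j => key n j M hM (by lia)

end ExtVanishing

theorem isNoetherianRing_mulOpposite_of_finite (R B : Type*) [CommRing R] [IsNoetherianRing R]
    [Ring B] [Algebra R B] [Module.Finite R B] : IsNoetherianRing Bᵐᵒᵖ :=
  have : Module.Finite R Bᵐᵒᵖ := Module.Finite.equiv (MulOpposite.opLinearEquiv R)
  isNoetherian_of_tower R (inferInstance : IsNoetherian R Bᵐᵒᵖ)

/-- If `E` is a finitely generated module all of whose indecomposable summands
are Ext-injective in `𝒫` (so `E ∈ 𝒫^⊥ ∩ 𝒫`), and `E` is tilting, then `E^⊥ = 𝒫^⊥`. -/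
theorem stmt_7 (Λ : Type u) [Ring Λ] (R : Type u) [CommRing R] [IsArtinianRing R]
    [Algebra R Λ] [Module.Finite R Λ]
    (E : ModuleCat.{u} Λᵐᵒᵖ) (hfg : Module.Finite Λᵐᵒᵖ E)
    (hsummands : ∀ M : ModuleCat.{u} Λᵐᵒᵖ, Indec M → IsSummand M E → ExtInjInP M)
    (hEP : InP E) (hEperp : InPerpOf InP E)
    (htilt : IsTilting E) :
    ∀ M : ModuleCat.{u} Λᵐᵒᵖ, ExtVanish E M ↔ InPerpOf InP M := by
  have := isNoetherianRing_mulOpposite_of_finite R Λ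
  exact fun M =>
    ⟨fun hM N hN => htilt.extVanish_of_inP hN (hEperp N hN) M hM, fun hM => hM E hEP⟩
end

section
/- Let Λ be an artin algebra and P the class of finitely generated right Λ-modules of finite projective dimension. Then P is contravariantly finite in mod Λ if and only if the direct sum E of a complete set of representatives of the indecomposable Ext-injective modules in P is a tilting Λ-module. -/
open CategoryTheory

universe u

section ExtLemmas

variable {A : Type u} [Ring A]

lemma subsingleton_ext_succ_iff (M N : ModuleCat.{u} A) (k : ℕ) :
    Subsingleton (ext M N (k + 1)) ↔ Subsingleton (Abelian.Ext M N (k + 1)) := by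
  let P := projectiveResolution M
  have h1 : Subsingleton (ext M N (k + 1)) ↔
      ∀ f : P.complex.X (k + 1) ⟶ N, P.complex.d (k + 2) (k + 1) ≫ f = 0 →
        ∃ g : P.complex.X k ⟶ N, P.complex.d (k + 1) k ≫ g = f := by
    rw [← ModuleCat.isZero_iff_subsingleton, (P.isoExt (k + 1) N).isZero_iff,
      ← HomologicalComplex.exactAt_iff_isZero_homology,
      HomologicalComplex.exactAt_iff' _ k (k + 1) (k + 2) (by simp) (by simp),
      ShortComplex.moduleCat_exact_iff]
    rfl
  rw [h1]
  constructor
  · intro h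
    refine ⟨fun a b => ?_⟩
    have key : ∀ a : Abelian.Ext M N (k + 1), a = 0 := by
      intro a
      obtain ⟨f, hf, rfl⟩ := P.extMk_surjective a (k + 2) rfl
      rw [P.extMk_eq_zero_iff f (k + 2) rfl hf k rfl]
      exact h f hf
    rw [key a, key b]
  · intro h f hf
    exact (P.extMk_eq_zero_iff f (k + 2) rfl hf k rfl).1 (Subsingleton.elim _ _)

lemma ShortExact.exists_shortComplex {M₁ M₂ M₃ : ModuleCat.{u} A} {f : M₁ →ₗ[A] M₂}
    {g : M₂ →ₗ[A] M₃} (h : ShortExact f g) :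
    ∃ w : ModuleCat.ofHom f ≫ ModuleCat.ofHom g = 0,
      (ShortComplex.mk (ModuleCat.ofHom f) (ModuleCat.ofHom g) w).ShortExact := by
  have w : ModuleCat.ofHom f ≫ ModuleCat.ofHom g = 0 := by
    ext x
    exact h.2.1.apply_apply_eq_zero x
  exact ⟨w,
    { exact := (ShortComplex.ShortExact.moduleCat_exact_iff_function_exact _).2 h.2.1
      mono_f := (ModuleCat.mono_iff_injective _).2 h.1
      epi_g := (ModuleCat.epi_iff_surjective _).2 h.2.2 }⟩

section LongExact

variable {M₁ M₂ M₃ : ModuleCat.{u} A} {f : M₁ →ₗ[A] M₂} {g : M₂ →ₗ[A] M₃}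

open Abelian

lemma ShortExact.ext_covariant₂ (h : ShortExact f g) (X : ModuleCat.{u} A) {k : ℕ} (hk : 0 < k)
    (h₁ : Subsingleton (ext X M₁ k)) (h₃ : Subsingleton (ext X M₃ k)) :
    Subsingleton (ext X M₂ k) := by
  obtain ⟨k, rfl⟩ := Nat.exists_eq_succ_of_ne_zero hk.ne'
  rw [Nat.succ_eq_add_one, subsingleton_ext_succ_iff] at *
  obtain ⟨w, hS⟩ := h.exists_shortComplex
  refine subsingleton_of_forall_eq 0 fun x => ?_
  obtain ⟨y, rfl⟩ := Ext.covariant_sequence_exact₂ X hS x (h₃.elim _ _)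
  rw [h₁.elim y 0, Ext.zero_comp]

lemma ShortExact.ext_covariant₁ (h : ShortExact f g) (X : ModuleCat.{u} A) {k : ℕ} (hk : 0 < k)
    (h₃ : Subsingleton (ext X M₃ k)) (h₂ : Subsingleton (ext X M₂ (k + 1))) :
    Subsingleton (ext X M₁ (k + 1)) := by
  obtain ⟨k, rfl⟩ := Nat.exists_eq_succ_of_ne_zero hk.ne'
  rw [Nat.succ_eq_add_one, subsingleton_ext_succ_iff] at *
  obtain ⟨w, hS⟩ := h.exists_shortComplex
  refine subsingleton_of_forall_eq 0 fun x => ?_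
  obtain ⟨y, rfl⟩ := Ext.covariant_sequence_exact₁ X hS x (h₂.elim _ _) rfl
  rw [h₃.elim y 0, Ext.zero_comp]

lemma ShortExact.ext_covariant₃ (h : ShortExact f g) (X : ModuleCat.{u} A) {k : ℕ} (hk : 0 < k)
    (h₂ : Subsingleton (ext X M₂ k)) (h₁ : Subsingleton (ext X M₁ (k + 1))) :
    Subsingleton (ext X M₃ k) := by
  obtain ⟨k, rfl⟩ := Nat.exists_eq_succ_of_ne_zero hk.ne'
  rw [Nat.succ_eq_add_one, subsingleton_ext_succ_iff] at *
  obtain ⟨w, hS⟩ := h.exists_shortComplex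
  refine subsingleton_of_forall_eq 0 fun x => ?_
  obtain ⟨y, rfl⟩ := Ext.covariant_sequence_exact₃ X hS x rfl (h₁.elim _ _)
  rw [h₂.elim y 0, Ext.zero_comp]

lemma ShortExact.ext_one_left_of_lift (h : ShortExact f g) (X : ModuleCat.{u} A)
    (h₂ : Subsingleton (ext X M₂ 1)) (hl : ∀ u : X →ₗ[A] M₃, ∃ v : X →ₗ[A] M₂, g ∘ₗ v = u) :
    Subsingleton (ext X M₁ 1) := by
  rw [show 1 = 0 + 1 from rfl, subsingleton_ext_succ_iff] at *
  obtain ⟨w, hS⟩ := h.exists_shortComplex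
  refine subsingleton_of_forall_eq 0 fun x => ?_
  obtain ⟨y, rfl⟩ := Ext.covariant_sequence_exact₁ X hS x (h₂.elim _ _) rfl
  obtain ⟨u, rfl⟩ := (Ext.mk₀_bijective X M₃).2 y
  obtain ⟨v, hv⟩ := hl u.hom
  have : u = ModuleCat.ofHom v ≫ ModuleCat.ofHom g := by
    rw [← ModuleCat.ofHom_comp, hv]; rfl
  rw [this, ← Ext.mk₀_comp_mk₀]
  simp only [Ext.comp_assoc_of_second_deg_zero]
  erw [hS.comp_extClass]
  simp

lemma ShortExact.exists_lift (h : ShortExact f g) {X : ModuleCat.{u} A}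
    (h₁ : Subsingleton (ext X M₁ 1)) (u : X →ₗ[A] M₃) : ∃ v : X →ₗ[A] M₂, g ∘ₗ v = u := by
  rw [show 1 = 0 + 1 from rfl, subsingleton_ext_succ_iff] at *
  obtain ⟨w, hS⟩ := h.exists_shortComplex
  obtain ⟨y, hy⟩ := Ext.covariant_sequence_exact₃ X hS (Ext.mk₀ (ModuleCat.ofHom u)) rfl
    (h₁.elim _ _)
  obtain ⟨v, rfl⟩ := (Ext.mk₀_bijective X M₂).2 y
  rw [Ext.mk₀_comp_mk₀] at hy
  refine ⟨v.hom, ?_⟩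
  have := congrArg ModuleCat.Hom.hom ((Ext.mk₀_bijective X M₃).1 hy)
  simpa using this

lemma ShortExact.ext_contravariant₂ (h : ShortExact f g) (Y : ModuleCat.{u} A) {k : ℕ}
    (hk : 0 < k) (h₁ : Subsingleton (ext M₁ Y k)) (h₃ : Subsingleton (ext M₃ Y k)) :
    Subsingleton (ext M₂ Y k) := by
  obtain ⟨k, rfl⟩ := Nat.exists_eq_succ_of_ne_zero hk.ne'
  rw [Nat.succ_eq_add_one, subsingleton_ext_succ_iff] at *
  obtain ⟨w, hS⟩ := h.exists_shortComplex
  refine subsingleton_of_forall_eq 0 fun x => ?_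
  obtain ⟨y, rfl⟩ := Ext.contravariant_sequence_exact₂ hS Y x (h₁.elim _ _)
  rw [h₃.elim y 0, Ext.comp_zero]

lemma ShortExact.ext_contravariant₁ (h : ShortExact f g) (Y : ModuleCat.{u} A) {k : ℕ}
    (hk : 0 < k) (h₂ : Subsingleton (ext M₂ Y k)) (h₃ : Subsingleton (ext M₃ Y (k + 1))) :
    Subsingleton (ext M₁ Y k) := by
  obtain ⟨k, rfl⟩ := Nat.exists_eq_succ_of_ne_zero hk.ne'
  rw [Nat.succ_eq_add_one, subsingleton_ext_succ_iff] at *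
  obtain ⟨w, hS⟩ := h.exists_shortComplex
  refine subsingleton_of_forall_eq 0 fun x => ?_
  obtain ⟨y, rfl⟩ := Ext.contravariant_sequence_exact₁ hS Y x (Nat.add_comm _ _) (h₃.elim _ _)
  rw [h₂.elim y 0, Ext.comp_zero]

lemma ShortExact.ext_contravariant₃ (h : ShortExact f g) (Y : ModuleCat.{u} A) {k : ℕ}
    (hk : 0 < k) (h₁ : Subsingleton (ext M₁ Y k)) (h₂ : Subsingleton (ext M₂ Y (k + 1))) :
    Subsingleton (ext M₃ Y (k + 1)) := by
  obtain ⟨k, rfl⟩ := Nat.exists_eq_succ_of_ne_zero hk.ne'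
  rw [Nat.succ_eq_add_one, subsingleton_ext_succ_iff] at *
  obtain ⟨w, hS⟩ := h.exists_shortComplex
  refine subsingleton_of_forall_eq 0 fun x => ?_
  obtain ⟨y, rfl⟩ := Ext.contravariant_sequence_exact₃ hS Y x (h₂.elim _ _) (Nat.add_comm _ _)
  rw [h₁.elim y 0, Ext.comp_zero]

lemma ShortExact.ext_one_right_of_extend (h : ShortExact f g) (Y : ModuleCat.{u} A)
    (h₂ : Subsingleton (ext M₂ Y 1)) (hl : ∀ u : M₁ →ₗ[A] Y, ∃ v : M₂ →ₗ[A] Y, v ∘ₗ f = u) :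
    Subsingleton (ext M₃ Y 1) := by
  rw [show 1 = 0 + 1 from rfl, subsingleton_ext_succ_iff] at *
  obtain ⟨w, hS⟩ := h.exists_shortComplex
  refine subsingleton_of_forall_eq 0 fun x => ?_
  obtain ⟨y, rfl⟩ := Ext.contravariant_sequence_exact₃ hS Y x (h₂.elim _ _) (add_zero 1)
  obtain ⟨u, rfl⟩ := (Ext.mk₀_bijective M₁ Y).2 y
  obtain ⟨v, hv⟩ := hl u.hom
  have : u = ModuleCat.ofHom f ≫ ModuleCat.ofHom v := by
    rw [← ModuleCat.ofHom_comp, hv]; rfl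
  rw [this, ← Ext.mk₀_comp_mk₀]
  rw [← Ext.comp_assoc hS.extClass (Ext.mk₀ _) (Ext.mk₀ _) (add_zero 1) (zero_add 0) (by simp)]
  erw [hS.extClass_comp]
  simp

lemma ShortExact.exists_extend (h : ShortExact f g) {Y : ModuleCat.{u} A}
    (h₃ : Subsingleton (ext M₃ Y 1)) (u : M₁ →ₗ[A] Y) : ∃ v : M₂ →ₗ[A] Y, v ∘ₗ f = u := by
  rw [show 1 = 0 + 1 from rfl, subsingleton_ext_succ_iff] at *
  obtain ⟨w, hS⟩ := h.exists_shortComplex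
  obtain ⟨y, hy⟩ := Ext.contravariant_sequence_exact₁ hS Y (Ext.mk₀ (ModuleCat.ofHom u)) rfl
    (h₃.elim _ _)
  obtain ⟨v, rfl⟩ := (Ext.mk₀_bijective M₂ Y).2 y
  rw [Ext.mk₀_comp_mk₀] at hy
  refine ⟨v.hom, ?_⟩
  have := congrArg ModuleCat.Hom.hom ((Ext.mk₀_bijective M₁ Y).1 hy)
  simpa using this

end LongExact

lemma subsingleton_ext_of_projective (M N : ModuleCat.{u} A) [Module.Projective A M] {k : ℕ}
    (hk : 0 < k) : Subsingleton (ext M N k) := by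
  obtain ⟨k, rfl⟩ := Nat.exists_eq_succ_of_ne_zero hk.ne'
  rw [Nat.succ_eq_add_one, subsingleton_ext_succ_iff]
  have : Projective M := (IsProjective.iff_projective M).1 inferInstance
  exact subsingleton_of_forall_eq 0 fun x => Abelian.Ext.eq_zero_of_projective x

lemma subsingleton_ext_of_injective (M N : ModuleCat.{u} A) [Module.Injective A N] {k : ℕ}
    (hk : 0 < k) : Subsingleton (ext M N k) := by
  obtain ⟨k, rfl⟩ := Nat.exists_eq_succ_of_ne_zero hk.ne'
  rw [Nat.succ_eq_add_one, subsingleton_ext_succ_iff]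
  have : Injective N := Module.injective_object_of_injective_module A N
  exact subsingleton_of_forall_eq 0 fun x => Abelian.Ext.eq_zero_of_injective x

/-- The endomorphisms of `M` which factor through a module in `X`. -/
def factorSet (X : ModuleCat.{u} A → Prop) (M : ModuleCat.{u} A) : Set (M →ₗ[A] M) :=
  {f | ∃ N : ModuleCat.{u} A, X N ∧ ∃ (s : M →ₗ[A] N) (r : N →ₗ[A] M), f = r ∘ₗ s}

/-- The identity of `M` is a finite sum of endomorphisms factoring through modules in `X`;
equivalently, `M` is a direct summand of a finite direct sum of modules in `X`. -/
def IdFactors (X : ModuleCat.{u} A → Prop) (M : ModuleCat.{u} A) : Prop :=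
  (LinearMap.id : M →ₗ[A] M) ∈ AddSubgroup.closure (factorSet X M)

lemma IdFactors.subsingleton_ext_left {X : ModuleCat.{u} A → Prop} {M : ModuleCat.{u} A}
    (hM : IdFactors X M) (Y : ModuleCat.{u} A) {k : ℕ} (hk : 0 < k)
    (h : ∀ N, X N → Subsingleton (ext N Y k)) : Subsingleton (ext M Y k) := by
  obtain ⟨k, rfl⟩ := Nat.exists_eq_succ_of_ne_zero hk.ne'
  simp only [Nat.succ_eq_add_one, subsingleton_ext_succ_iff] at *
  refine subsingleton_of_forall_eq 0 fun x => ?_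
  have key : ∀ f : M →ₗ[A] M, f ∈ AddSubgroup.closure (factorSet X M) →
      (Abelian.Ext.mk₀ (ModuleCat.ofHom f)).comp x (zero_add _) = 0 := by
    intro f hf
    induction hf using AddSubgroup.closure_induction with
    | mem f hf =>
      obtain ⟨N, hN, s, r, rfl⟩ := hf
      rw [ModuleCat.ofHom_comp, ← Abelian.Ext.mk₀_comp_mk₀,
        Abelian.Ext.comp_assoc _ _ _ (zero_add 0) (zero_add _) (by simp),
        (h N hN).elim ((Abelian.Ext.mk₀ (ModuleCat.ofHom r)).comp x (zero_add _)) 0,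
        Abelian.Ext.comp_zero]
    | zero => simp
    | add f g _ _ hf hg => simp [ModuleCat.ofHom_add, Abelian.Ext.mk₀_add, hf, hg]
    | neg f _ hf =>
      rw [show ModuleCat.ofHom (-f) = -ModuleCat.ofHom f from rfl, Abelian.Ext.mk₀_neg]
      simp [hf]
  simpa using key _ hM

lemma IdFactors.subsingleton_ext_right {X : ModuleCat.{u} A → Prop} {M : ModuleCat.{u} A}
    (hM : IdFactors X M) (Y : ModuleCat.{u} A) {k : ℕ} (hk : 0 < k)
    (h : ∀ N, X N → Subsingleton (ext Y N k)) : Subsingleton (ext Y M k) := by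
  obtain ⟨k, rfl⟩ := Nat.exists_eq_succ_of_ne_zero hk.ne'
  simp only [Nat.succ_eq_add_one, subsingleton_ext_succ_iff] at *
  refine subsingleton_of_forall_eq 0 fun x => ?_
  have key : ∀ f : M →ₗ[A] M, f ∈ AddSubgroup.closure (factorSet X M) →
      x.comp (Abelian.Ext.mk₀ (ModuleCat.ofHom f)) (add_zero _) = 0 := by
    intro f hf
    induction hf using AddSubgroup.closure_induction with
    | mem f hf =>
      obtain ⟨N, hN, s, r, rfl⟩ := hf
      rw [ModuleCat.ofHom_comp, ← Abelian.Ext.mk₀_comp_mk₀,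
        ← Abelian.Ext.comp_assoc _ _ _ (add_zero _) (zero_add 0) (by simp),
        (h N hN).elim (x.comp (Abelian.Ext.mk₀ (ModuleCat.ofHom s)) (add_zero _)) 0,
        Abelian.Ext.zero_comp]
    | zero => simp
    | add f g _ _ hf hg => simp [ModuleCat.ofHom_add, Abelian.Ext.mk₀_add, hf, hg]
    | neg f _ hf =>
      rw [show ModuleCat.ofHom (-f) = -ModuleCat.ofHom f from rfl, Abelian.Ext.mk₀_neg]
      simp [hf]
  simpa using key _ hM

end ExtLemmas

section FiniteInjective

variable {A : Type u} [Ring A]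

lemma finite_of_essential (R : Type*) [CommRing R] [IsNoetherianRing R] [Algebra R A]
    [Module.Finite R A] [IsSemiprimaryRing A] {J : Type*} [AddCommGroup J] [Module R J]
    [Module A J] [IsScalarTower R A J] (M : Submodule A J) [Module.Finite A M]
    (hM : ∀ x : J, x ≠ 0 → ∃ a : A, a • x ∈ M ∧ a • x ≠ 0) : Module.Finite A J := by
  have : IsNoetherian R A := isNoetherian_of_isNoetherianRing_of_finite R A
  have : IsNoetherian A A := isNoetherian_of_tower R this
  have hfg : (Ring.jacobson A).FG := IsNoetherian.noetherian _
  have : Module.Finite R M := .trans A M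
  have hMN : IsNoetherian R M := isNoetherian_of_isNoetherianRing_of_finite R M
  let S : Submodule A J :=
    { carrier := {x | ∀ a ∈ Ring.jacobson A, a • x = 0}
      add_mem' := fun hx hy a ha => by simp [smul_add, hx a ha, hy a ha]
      zero_mem' := fun a _ => smul_zero a
      smul_mem' := fun b x hx a ha => by
        rw [smul_smul]; exact hx _ (Ideal.mul_mem_right _ _ ha) }
  have hSM : S ≤ M := by
    have hS : Module.IsTorsionBySet A S (Ring.jacobson A) := by
      rintro ⟨x, hx⟩ ⟨a, ha⟩
      exact Subtype.ext (hx a ha)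
    let := hS.module
    have : IsSemisimpleModule A S :=
      (hS.semilinearMap.isSemisimpleModule_iff_of_bijective Function.bijective_id).2 inferInstance
    obtain ⟨C, hC⟩ := exists_isCompl (M.comap S.subtype)
    have hC0 : C = ⊥ := by
      rw [eq_bot_iff]
      intro c hc
      by_contra h
      obtain ⟨a, ha, ha0⟩ := hM (c : J) (by simpa using h)
      have : a • c ∈ M.comap S.subtype ⊓ C := ⟨ha, C.smul_mem a hc⟩
      rw [hC.inf_eq_bot, Submodule.mem_bot] at this
      exact ha0 (congrArg Subtype.val this)
    have := hC.sup_eq_top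
    rw [hC0, sup_bot_eq] at this
    intro x hx
    have : (⟨x, hx⟩ : S) ∈ M.comap S.subtype := this ▸ Submodule.mem_top
    exact this
  let T (k : ℕ) : Submodule R J :=
    { carrier := {x | ∀ a ∈ Ring.jacobson A ^ k, a • x = 0}
      add_mem' := fun hx hy a ha => by simp [smul_add, hx a ha, hy a ha]
      zero_mem' := fun a _ => smul_zero a
      smul_mem' := fun b x hx a ha => by rw [smul_comm, hx a ha, smul_zero] }
  have hT : ∀ k, IsNoetherian R (T k) := by
    intro k
    induction k with
    | zero =>
      have : T 0 = ⊥ := by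
        rw [eq_bot_iff]
        intro x hx
        simpa using hx 1 (by rw [(Ring.jacobson A).pow_zero, Ideal.one_eq_top]; trivial)
      rw [this]
      infer_instance
    | succ k ih =>
      obtain ⟨n, r, hr⟩ := Submodule.fg_iff_exists_fin_generating_family.1 hfg
      let φ : T (k + 1) →ₗ[R] (Fin n → T k) :=
        { toFun := fun x i => ⟨r i • (x : J), fun a ha => by
            rw [smul_smul]
            refine x.2 _ ?_
            rw [(Ring.jacobson A).pow_succ]
            exact Ideal.mul_mem_mul ha (hr ▸ Submodule.subset_span ⟨i, rfl⟩)⟩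
          map_add' := fun x y => by ext i; simp
          map_smul' := fun c x => by ext i; exact smul_comm (r i) c (x : J) }
      have hker : ∀ x : T (k + 1), φ x = 0 → (x : J) ∈ S := by
        intro x hx a ha
        have h1 : ∀ i, r i • (x : J) = 0 := fun i => congrArg Subtype.val (congrFun hx i)
        have : Ring.jacobson A ≤ LinearMap.ker (LinearMap.toSpanSingleton A J x) := by
          rw [← hr, Submodule.span_le]
          rintro _ ⟨i, rfl⟩
          exact h1 i
        exact this ha
      let ψ : LinearMap.ker φ →ₗ[R] M :=
        { toFun := fun x => ⟨x.1.1, hSM (hker _ x.2)⟩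
          map_add' := fun _ _ => rfl
          map_smul' := fun _ _ => rfl }
      have hψ : Function.Injective ψ := fun x y h =>
        by
        have h' : (x.1.1 : J) = y.1.1 := congrArg (fun z : M => (z : J)) h
        exact Subtype.ext (Subtype.ext h')
      have : IsNoetherian R (LinearMap.ker φ) := isNoetherian_of_injective ψ hψ
      exact isNoetherian_of_range_eq_ker (LinearMap.ker φ).subtype φ (by simp)
  obtain ⟨n, hn⟩ := IsSemiprimaryRing.isNilpotent (R := A)
  have htop : T n = ⊤ := by
    rw [eq_top_iff]
    intro x _ a ha
    rw [hn] at ha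
    rw [show a = 0 from ha, zero_smul]
  have hTn := hT n
  rw [htop] at hTn
  have : IsNoetherian R J := isNoetherian_top_iff.1 hTn
  exact Module.Finite.of_restrictScalars_finite R A J

lemma exists_injective_essential (M : ModuleCat.{u} A) :
    ∃ (J : ModuleCat.{u} A) (f : M →ₗ[A] J), Module.Injective A J ∧ Function.Injective f ∧
      ∀ x : J, x ≠ 0 → ∃ a : A, a • x ∈ LinearMap.range f ∧ a • x ≠ 0 := by
  let I := Injective.under M
  let i : M →ₗ[A] I := (Injective.ι M).hom
  have hi : Function.Injective i := (ModuleCat.mono_iff_injective _).1 (Injective.ι_mono M)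
  have hI : Module.Injective A I :=
    have : Injective (Injective.under M) := Injective.injective_under M
    Module.injective_module_of_injective_object (inj := this)
  let P : Set (Submodule A I) :=
    {J | ∀ x ∈ J, x ≠ 0 → ∃ a : A, a • x ∈ LinearMap.range i ∧ a • x ≠ 0}
  obtain ⟨J, hJM, hJ⟩ := zorn_le_nonempty₀ P (fun c hc hch y hy => by
    refine ⟨sSup c, fun x hx hx0 => ?_, fun z hz => le_sSup hz⟩
    obtain ⟨J, hJ, hxJ⟩ := (Submodule.mem_sSup_of_directed ⟨y, hy⟩ hch.directedOn).1 hx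
    exact hc hJ x hxJ hx0) (LinearMap.range i) (fun x hx hx0 => ⟨1, by simpa using hx, by simpa⟩)
  obtain ⟨C, hC⟩ := zorn_le₀ {C : Submodule A I | Disjoint J C} (fun c hc hch =>
    ⟨sSup c, by
      change Disjoint J (sSup c)
      rw [hch.directedOn.disjoint_sSup_right]
      exact fun C hC => hc hC, fun z hz => le_sSup hz⟩)
  have hCJ : Disjoint J C := hC.prop
  let j : J →ₗ[A] (I ⧸ C) := C.mkQ ∘ₗ J.subtype
  have hj : Function.Injective j := by
    rw [← LinearMap.ker_eq_bot, eq_bot_iff]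
    intro x hx
    have hx : (x : I) ∈ C := by simpa [j] using hx
    have := hCJ.le_bot ⟨x.2, hx⟩
    simpa using this
  obtain ⟨φ, hφ⟩ := hI.out j hj J.subtype
  have hφ' : ∀ x ∈ J, φ (C.mkQ x) = x := fun x hx => hφ ⟨x, hx⟩
  have hker : ∀ x, φ (C.mkQ x) = 0 → x ∈ C := by
    have hle : C ≤ LinearMap.ker (φ ∘ₗ C.mkQ) := by
      intro x hx
      simp [(Submodule.Quotient.mk_eq_zero C).2 hx]
    have : Disjoint J (LinearMap.ker (φ ∘ₗ C.mkQ)) := by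
      rw [Submodule.disjoint_def]
      intro x hx hx'
      rw [← hφ' x hx]
      exact hx'
    exact fun x hx => hC.le_of_ge this hle hx
  have hrange : LinearMap.range (φ ∘ₗ C.mkQ) ≤ J := by
    refine hJ.le_of_ge (fun y hy hy0 => ?_) (fun x hx => ⟨x, hφ' x hx⟩)
    obtain ⟨z, rfl⟩ := hy
    have hzC : z ∉ C := fun h => hy0 (by simp [(Submodule.Quotient.mk_eq_zero C).2 h])
    have hnd : ¬ Disjoint J (C ⊔ Submodule.span A {z}) := fun h =>
      hzC (hC.le_of_ge h le_sup_left
        (Submodule.mem_sup_right (Submodule.mem_span_singleton_self z)))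
    rw [Submodule.disjoint_def] at hnd
    push Not at hnd
    obtain ⟨w, hwJ, hw, hw0⟩ := hnd
    obtain ⟨c, hc, d, hd, rfl⟩ := Submodule.mem_sup.1 hw
    obtain ⟨a, rfl⟩ := Submodule.mem_span_singleton.1 hd
    obtain ⟨b, hb, hb0⟩ := hJ.prop _ hwJ hw0
    have : a • (φ ∘ₗ C.mkQ) z = c + a • z := by
      rw [← hφ' _ hwJ]
      simp [(Submodule.Quotient.mk_eq_zero C).2 hc]
    exact ⟨b * a, by rw [mul_smul, this]; exact hb, by rw [mul_smul, this]; exact hb0⟩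
  let p : I →ₗ[A] J := (φ ∘ₗ C.mkQ).codRestrict J (fun x => hrange ⟨x, rfl⟩)
  have hp : ∀ x : J, p x = x := fun x => Subtype.ext (hφ' x x.2)
  refine ⟨ModuleCat.of A J, i.codRestrict J (fun x => hJM ⟨x, rfl⟩), ⟨fun X Y _ _ _ _ f hf g => ?_⟩,
    fun x y h => hi (congrArg Subtype.val h), fun x hx => ?_⟩
  · obtain ⟨h, hh⟩ := hI.out f hf (J.subtype ∘ₗ g)
    exact ⟨p ∘ₗ h, fun x => by simp [hh, hp]⟩
  · obtain ⟨a, ⟨m, hm⟩, ha0⟩ := hJ.prop x.1 x.2 (fun h => hx (Subtype.ext h))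
    exact ⟨a, ⟨m, Subtype.ext hm⟩, fun h => ha0 (congrArg Subtype.val h)⟩

lemma exists_finite_injective (R : Type*) [CommRing R] [IsArtinianRing R] [Algebra R A]
    [Module.Finite R A] (M : ModuleCat.{u} A) [Module.Finite A M] :
    ∃ (J : ModuleCat.{u} A) (f : M →ₗ[A] J), Module.Finite A J ∧ Module.Injective A J ∧
      Function.Injective f := by
  obtain ⟨J, f, hJ, hf, hess⟩ := exists_injective_essential M
  let : Module R J := Module.compHom J (algebraMap R A)
  have : IsScalarTower R A J := ⟨fun r a x => by
    rw [Algebra.smul_def, mul_smul]; rfl⟩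
  have : IsArtinian R A := isArtinian_of_fg_of_artinian'
  have : IsArtinianRing A := isArtinian_of_tower R this
  exact ⟨J, f, finite_of_essential R (LinearMap.range f) hess, hJ, hf⟩

end FiniteInjective

section ShortExactConstructions

variable {A : Type u} [Ring A]

lemma ShortExact.of_surjective {M N : ModuleCat.{u} A} (g : M →ₗ[A] N)
    (hg : Function.Surjective g) :
    ShortExact (M₁ := ModuleCat.of A (LinearMap.ker g)) (LinearMap.ker g).subtype g :=
  ⟨Subtype.val_injective, LinearMap.exact_subtype_ker_map g, hg⟩

lemma ShortExact.of_injective {M N : ModuleCat.{u} A} (f : M →ₗ[A] N)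
    (hf : Function.Injective f) :
    ShortExact (M₃ := ModuleCat.of A (N ⧸ LinearMap.range f)) f (LinearMap.range f).mkQ :=
  ⟨hf, LinearMap.exact_map_mkQ_range f, Submodule.mkQ_surjective _⟩

variable {M₁ M₂ M₃ : ModuleCat.{u} A} {f : M₁ →ₗ[A] M₂} {g : M₂ →ₗ[A] M₃}

lemma ShortExact.exists_pushout (h : ShortExact f g) {M₁' : ModuleCat.{u} A} (u : M₁ →ₗ[A] M₁') :
    ∃ (B : ModuleCat.{u} A) (f' : M₁' →ₗ[A] B) (g' : B →ₗ[A] M₃) (j : M₂ →ₗ[A] B),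
      ShortExact f' g' ∧ g' ∘ₗ j = g ∧ j ∘ₗ f = f' ∘ₗ u ∧
      (∀ (Z : ModuleCat.{u} A) (a : M₁' →ₗ[A] Z) (b : M₂ →ₗ[A] Z), a ∘ₗ u = b ∘ₗ f →
        ∃ c : B →ₗ[A] Z, c ∘ₗ f' = a ∧ c ∘ₗ j = b) ∧
      (∀ (D : ModuleCat.{u} A) (q : M₁' →ₗ[A] D), ShortExact u q →
        ∃ q' : B →ₗ[A] D, ShortExact j q') := by
  let N : Submodule A (M₁' × M₂) := LinearMap.range (u.prod (-f))
  have hN : ∀ x, x ∈ N ↔ ∃ a, u a = x.1 ∧ -f a = x.2 := fun x => by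
    simp [N, Prod.ext_iff]
  have hlift : ∀ (Z : ModuleCat.{u} A) (a : M₁' →ₗ[A] Z) (b : M₂ →ₗ[A] Z), a ∘ₗ u = b ∘ₗ f →
      N ≤ LinearMap.ker (a.coprod b) := by
    intro Z a b hab x hx
    obtain ⟨y, h1, h2⟩ := (hN x).1 hx
    have := LinearMap.congr_fun hab y
    simp only [LinearMap.comp_apply] at this
    simp [← h1, ← h2, this]
  have hgf : (0 : M₁' →ₗ[A] M₃) ∘ₗ u = g ∘ₗ f := by
    rw [LinearMap.zero_comp, h.2.1.linearMap_comp_eq_zero]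
  refine ⟨ModuleCat.of A ((M₁' × M₂) ⧸ N), N.mkQ ∘ₗ LinearMap.inl A M₁' M₂,
    N.liftQ _ (hlift M₃ 0 g hgf), N.mkQ ∘ₗ LinearMap.inr A M₁' M₂, ⟨?_, ?_, ?_⟩, ?_, ?_, ?_, ?_⟩
  · rw [← LinearMap.ker_eq_bot, eq_bot_iff]
    intro x hx
    simp only [LinearMap.mem_ker, LinearMap.comp_apply, Submodule.mkQ_apply,
      Submodule.Quotient.mk_eq_zero, hN] at hx
    obtain ⟨a, h1, h2⟩ := hx
    have : a = 0 := h.1 (by simpa using h2)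
    simp [← show u a = x from h1, this]
  · intro x
    obtain ⟨⟨a, b⟩, rfl⟩ := N.mkQ_surjective x
    constructor
    · intro hx
      have hx : g b = 0 := by simpa using hx
      obtain ⟨y, rfl⟩ := (h.2.1 b).1 hx
      refine ⟨a + u y, ?_⟩
      simp only [LinearMap.comp_apply, Submodule.mkQ_apply]
      rw [Submodule.Quotient.eq, hN]
      exact ⟨y, by simp, by simp⟩
    · rintro ⟨y, hy⟩
      rw [← hy]
      simp
  · intro x
    obtain ⟨b, rfl⟩ := h.2.2 x
    exact ⟨N.mkQ (0, b), by simp⟩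
  · ext b
    simp
  · ext a
    simp only [LinearMap.comp_apply, Submodule.mkQ_apply]
    rw [Submodule.Quotient.eq, hN]
    exact ⟨-a, by simp, by simp⟩
  · intro Z a b hab
    exact ⟨N.liftQ _ (hlift Z a b hab), by ext; simp, by ext; simp⟩
  · intro D q hq
    have h0 : q ∘ₗ u = 0 ∘ₗ f := by rw [LinearMap.zero_comp, hq.2.1.linearMap_comp_eq_zero]
    refine ⟨N.liftQ _ (hlift D q 0 h0), ?_, ?_, ?_⟩
    · rw [← LinearMap.ker_eq_bot, eq_bot_iff]
      intro x hx
      simp only [LinearMap.mem_ker, LinearMap.comp_apply, Submodule.mkQ_apply,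
        Submodule.Quotient.mk_eq_zero, hN] at hx
      obtain ⟨a, h1, h2⟩ := hx
      have : a = 0 := hq.1 (by simpa using h1)
      simp [← show -f a = x from h2, this]
    · intro x
      obtain ⟨⟨a, b⟩, rfl⟩ := N.mkQ_surjective x
      constructor
      · intro hx
        have hx : q a = 0 := by simpa using hx
        obtain ⟨y, rfl⟩ := (hq.2.1 a).1 hx
        refine ⟨b + f y, ?_⟩
        simp only [LinearMap.comp_apply, Submodule.mkQ_apply]
        rw [Submodule.Quotient.eq, hN]
        exact ⟨-y, by simp, by simp⟩
      · rintro ⟨y, hy⟩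
        rw [← hy]
        simp
    · intro x
      obtain ⟨b, rfl⟩ := hq.2.2 x
      exact ⟨N.mkQ (b, 0), by simp⟩

lemma ShortExact.exists_pullback (h : ShortExact f g) {M₃' : ModuleCat.{u} A} (v : M₃' →ₗ[A] M₃) :
    ∃ (B : ModuleCat.{u} A) (f' : M₁ →ₗ[A] B) (g' : B →ₗ[A] M₃') (j : B →ₗ[A] M₂),
      ShortExact f' g' ∧ g ∘ₗ j = v ∘ₗ g' ∧
      (∀ (K : ModuleCat.{u} A) (k : K →ₗ[A] M₃'), ShortExact k v →
        ∃ k' : K →ₗ[A] B, ShortExact k' j) ∧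
      (∀ (D : ModuleCat.{u} A) (w : M₃ →ₗ[A] D), ShortExact v w →
        ShortExact j (w ∘ₗ g)) := by
  let B : Submodule A (M₂ × M₃') := LinearMap.ker (g.coprod (-v))
  have hB : ∀ x, x ∈ B ↔ g x.1 = v x.2 := fun x => by
    simp [B, add_neg_eq_zero]
  refine ⟨ModuleCat.of A B,
    (LinearMap.inl A M₂ M₃' ∘ₗ f).codRestrict B (fun x => by
      simp [hB, h.2.1.apply_apply_eq_zero x]),
    LinearMap.snd A M₂ M₃' ∘ₗ B.subtype, LinearMap.fst A M₂ M₃' ∘ₗ B.subtype,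
    ⟨?_, ?_, ?_⟩, ?_, ?_, ?_⟩
  · intro x y hxy
    exact h.1 (congrArg (fun z : B => z.1.1) hxy)
  · rintro ⟨⟨a, b⟩, hab⟩
    constructor
    · intro hx
      have hx : b = 0 := hx
      subst hx
      rw [hB] at hab
      obtain ⟨y, rfl⟩ := (h.2.1 a).1 (by simpa using hab)
      exact ⟨y, rfl⟩
    · rintro ⟨y, hy⟩
      rw [← hy]
      rfl
  · intro x
    obtain ⟨b, hb⟩ := h.2.2 (v x)
    exact ⟨⟨(b, x), (hB _).2 hb⟩, rfl⟩
  · ext x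
    exact (hB _).1 x.2
  · intro K k hk
    refine ⟨(LinearMap.inr A M₂ M₃' ∘ₗ k).codRestrict B (fun x => by
      simp [hB, hk.2.1.apply_apply_eq_zero x]), ?_, ?_, ?_⟩
    · intro x y hxy
      exact hk.1 (congrArg (fun z : B => z.1.2) hxy)
    · rintro ⟨⟨a, b⟩, hab⟩
      constructor
      · intro hx
        have hx : a = 0 := hx
        subst hx
        rw [hB] at hab
        obtain ⟨y, rfl⟩ := (hk.2.1 b).1 (by simpa using hab.symm)
        exact ⟨y, rfl⟩
      · rintro ⟨y, hy⟩
        rw [← hy]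
        rfl
    · intro x
      obtain ⟨b, hb⟩ := hk.2.2 (g x)
      exact ⟨⟨(x, b), (hB _).2 hb.symm⟩, rfl⟩
  · intro D w hw
    refine ⟨?_, ?_, hw.2.2.comp h.2.2⟩
    · rintro ⟨⟨a, b⟩, hab⟩ ⟨⟨a', b'⟩, hab'⟩ hxy
      have hxy : a = a' := hxy
      subst hxy
      rw [hB] at hab hab'
      obtain rfl : b = b' := hw.1 (hab.symm.trans hab')
      rfl
    · intro x
      constructor
      · intro hx
        obtain ⟨c, hc⟩ := (hw.2.1 (g x)).1 hx
        exact ⟨⟨(x, c), (hB _).2 hc.symm⟩, rfl⟩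
      · rintro ⟨⟨⟨a, b⟩, hab⟩, rfl⟩
        have : g a = v b := (hB _).1 hab
        simp only [LinearMap.comp_apply, Submodule.subtype_apply, LinearMap.fst_apply]
        rw [this, hw.2.1.apply_apply_eq_zero]

lemma ShortExact.finite₂ (h : ShortExact f g) (h₁ : Module.Finite A M₁)
    (h₃ : Module.Finite A M₃) : Module.Finite A M₂ := by
  refine ⟨Submodule.fg_of_fg_map_of_fg_inf_ker g ?_ ?_⟩
  · rw [Submodule.map_top, LinearMap.range_eq_top.2 h.2.2]
    exact h₃.1
  · rw [top_inf_eq, h.2.1.linearMap_ker_eq, ← Submodule.map_top]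
    exact h₁.1.map f

lemma ShortExact.finite₁ [IsNoetherianRing A] (h : ShortExact f g) (h₂ : Module.Finite A M₂) :
    Module.Finite A M₁ :=
  Module.Finite.of_injective f h.1

lemma ShortExact.finite₃ (h : ShortExact f g) (h₂ : Module.Finite A M₂) :
    Module.Finite A M₃ :=
  Module.Finite.of_surjective g h.2.2

lemma pdLE.mono {M : ModuleCat.{u} A} {m n : ℕ} (h : pdLE M m) (hmn : m ≤ n) : pdLE M n :=
  fun i hi N => h i (by lia) N

lemma ShortExact.pdLE₂ (h : ShortExact f g) {n : ℕ} (h₁ : pdLE M₁ n) (h₃ : pdLE M₃ n) :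
    pdLE M₂ n :=
  fun i hi N => h.ext_contravariant₂ N (by lia) (h₁ i hi N) (h₃ i hi N)

lemma ShortExact.pdLE₁ (h : ShortExact f g) {n : ℕ} (h₂ : pdLE M₂ n) (h₃ : pdLE M₃ (n + 1)) :
    pdLE M₁ n :=
  fun i hi N => h.ext_contravariant₁ N (by lia) (h₂ i hi N) (h₃ (i + 1) (by lia) N)

lemma ShortExact.inP₂ (h : ShortExact f g) (h₁ : InP M₁) (h₃ : InP M₃) : InP M₂ := by
  obtain ⟨f₁, n₁, p₁⟩ := h₁
  obtain ⟨f₃, n₃, p₃⟩ := h₃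
  exact ⟨h.finite₂ f₁ f₃, max n₁ n₃,
    h.pdLE₂ (p₁.mono (le_max_left _ _)) (p₃.mono (le_max_right _ _))⟩

lemma ShortExact.inP₁ [IsNoetherianRing A] (h : ShortExact f g) (h₂ : InP M₂) (h₃ : InP M₃) :
    InP M₁ := by
  obtain ⟨f₂, n₂, p₂⟩ := h₂
  obtain ⟨f₃, n₃, p₃⟩ := h₃
  exact ⟨h.finite₁ f₂, max n₂ n₃,
    h.pdLE₁ (p₂.mono (le_max_left _ _)) (p₃.mono (by lia))⟩

lemma pdLE_of_projective (M : ModuleCat.{u} A) [Module.Projective A M] : pdLE M 0 :=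
  fun _ hi N => subsingleton_ext_of_projective M N hi

lemma inP_of_projective (M : ModuleCat.{u} A) [Module.Projective A M] [hM : Module.Finite A M] :
    InP M :=
  ⟨hM, 0, pdLE_of_projective M⟩

lemma exists_free_presentation [IsNoetherianRing A] (M : ModuleCat.{u} A) [Module.Finite A M] :
    ∃ (K Q : ModuleCat.{u} A) (f : K →ₗ[A] Q) (g : Q →ₗ[A] M), ShortExact f g ∧
      Module.Finite A K ∧ Module.Finite A Q ∧ Module.Projective A Q := by
  obtain ⟨n, g, hg⟩ := Module.Finite.exists_fin' A M
  have h := ShortExact.of_surjective (M := ModuleCat.of A (Fin n → A)) g hg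
  have hQ : Module.Finite A (ModuleCat.of A (Fin n → A)) :=
    inferInstanceAs (Module.Finite A (Fin n → A))
  exact ⟨_, _, _, _, h, h.finite₁ hQ, hQ, inferInstanceAs (Module.Projective A (Fin n → A))⟩

/-- Ext-injectivity in degree one propagates to all positive degrees, because syzygies of modules
of finite projective dimension have finite projective dimension. -/
lemma ExtInjInP.extVanish [IsNoetherianRing A] {M : ModuleCat.{u} A}
    (hM : ∀ N : ModuleCat.{u} A, InP N → Subsingleton (ext N M 1)) {N : ModuleCat.{u} A}
    (hN : InP N) : ExtVanish N M := by
  intro i hi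
  obtain ⟨i, rfl⟩ := Nat.exists_eq_succ_of_ne_zero hi.ne'
  induction i generalizing N with
  | zero => exact hM N hN
  | succ i ih =>
    have := hN.1
    obtain ⟨K, Q, f, g, h, hK, hQ, hQp⟩ := exists_free_presentation N
    exact h.ext_contravariant₃ M (Nat.succ_pos i)
      (ih (h.inP₁ (inP_of_projective Q) hN) (Nat.succ_pos i))
      (subsingleton_ext_of_projective Q M (Nat.succ_pos _))

end ShortExactConstructions

section Summands

variable {A : Type u} [Ring A]

variable {X Y : ModuleCat.{u} A → Prop} {M N : ModuleCat.{u} A}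

lemma IdFactors.of_mem (hM : X M) : IdFactors X M :=
  AddSubgroup.subset_closure ⟨M, hM, LinearMap.id, LinearMap.id, rfl⟩

lemma IdFactors.of_isSummand (h : IsSummand M N) : IdFactors (fun K => K = N) M := by
  obtain ⟨s, r, h⟩ := h
  exact AddSubgroup.subset_closure ⟨N, rfl, s, r, h.symm⟩

lemma comp_mem_closure_factorSet (hN : IdFactors Y N) (s : M →ₗ[A] N) (r : N →ₗ[A] M) :
    r ∘ₗ s ∈ AddSubgroup.closure (factorSet Y M) := by
  have key : ∀ e ∈ AddSubgroup.closure (factorSet Y N),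
      r ∘ₗ e ∘ₗ s ∈ AddSubgroup.closure (factorSet Y M) := by
    intro e he
    induction he using AddSubgroup.closure_induction with
    | mem f hf =>
      obtain ⟨K, hK, a, b, rfl⟩ := hf
      exact AddSubgroup.subset_closure ⟨K, hK, a ∘ₗ s, r ∘ₗ b, rfl⟩
    | zero => simp
    | add f g _ _ hf hg =>
      rw [LinearMap.add_comp, LinearMap.comp_add]
      exact add_mem hf hg
    | neg f _ hf =>
      rw [LinearMap.neg_comp, LinearMap.comp_neg]
      exact neg_mem hf
  exact key _ hN

lemma IdFactors.trans (hM : IdFactors X M) (h : ∀ N, X N → IdFactors Y N) : IdFactors Y M := by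
  refine (AddSubgroup.closure_le _).2 ?_ hM
  rintro f ⟨N, hN, s, r, rfl⟩
  exact comp_mem_closure_factorSet (h N hN) s r

lemma IdFactors.pdLE (hM : IdFactors X M) {n : ℕ} (h : ∀ N, X N → pdLE N n) : pdLE M n :=
  fun i hi Z => hM.subsingleton_ext_left Z (by lia) fun N hN => h N hN i hi Z

lemma IdFactors.exists_fin (hM : IdFactors X M) :
    ∃ (k : ℕ) (F : Fin k → ModuleCat.{u} A) (s : ∀ i, M →ₗ[A] F i) (r : ∀ i, F i →ₗ[A] M),
      (∀ i, X (F i)) ∧ ∑ i, r i ∘ₗ s i = LinearMap.id := by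
  have h : LinearMap.id ∈ AddSubgroup.closure (factorSet X M) := hM
  rw [← Submodule.span_int_eq_addSubgroupClosure, Submodule.mem_toAddSubgroup,
    Submodule.mem_span_set'] at h
  obtain ⟨k, c, g, h⟩ := h
  choose F hF s r hg using fun i => (g i).2
  exact ⟨k, F, s, fun i => c i • r i, hF, by rw [← h]; simp [hg, LinearMap.smul_comp]⟩

lemma IdFactors.inAddOf (hM : IdFactors X M) : InAddOf X M := by
  obtain ⟨k, F, s, r, hF, h⟩ := hM.exists_fin
  refine ⟨k, F, hF, ∑ i, DirectSum.lof A (Fin k) (fun i => F i) i ∘ₗ s i,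
    DirectSum.toModule A (Fin k) M r, ?_⟩
  rw [← h]
  ext x
  simp

lemma IdFactors.finite [IsNoetherianRing A] (hM : IdFactors X M)
    (h : ∀ N, X N → Module.Finite A N) : Module.Finite A M := by
  obtain ⟨k, F, s, r, hF, hid⟩ := hM.exists_fin
  have (i : _) : Module.Finite A (F i) := h _ (hF i)
  refine Module.Finite.of_surjective (∑ i, r i ∘ₗ LinearMap.proj i : (∀ i, F i) →ₗ[A] M) fun x =>
    ⟨fun i => s i x, ?_⟩
  simpa using LinearMap.congr_fun hid x

lemma directSum_id_eq_sum {ι : Type*} [Fintype ι] [DecidableEq ι] (F : ι → Type*)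
    [∀ i, AddCommGroup (F i)] [∀ i, Module A (F i)] :
    (LinearMap.id : (DirectSum ι F) →ₗ[A] (DirectSum ι F)) =
      ∑ i, DirectSum.lof A ι F i ∘ₗ DirectSum.component A ι F i := by
  ext i x j
  simp only [LinearMap.comp_apply, LinearMap.id_apply, LinearMap.sum_apply]
  rw [Finset.sum_eq_single i]
  · rw [DirectSum.component.lof_self]
  · intro b _ hb
    rw [DirectSum.component.of, dif_neg hb.symm, map_zero]
  · simp

lemma idFactors_directSum {ι : Type u} [Finite ι] (F : ι → ModuleCat.{u} A) :
    IdFactors (fun N => ∃ i, N = F i) (ModuleCat.of A (DirectSum ι fun i => F i)) := by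
  classical
  have := Fintype.ofFinite ι
  have h := directSum_id_eq_sum (A := A) (fun i => F i)
  unfold IdFactors
  rw [show (LinearMap.id : ModuleCat.of A (DirectSum ι fun i => F i) →ₗ[A] _) = _ from h]
  exact sum_mem fun i _ => AddSubgroup.subset_closure ⟨F i, ⟨i, rfl⟩, _, _, rfl⟩

lemma InAddOf.idFactors (h : InAddOf X M) : IdFactors X M := by
  obtain ⟨k, F, hF, hs⟩ := h
  refine (IdFactors.of_isSummand hs).trans ?_
  rintro _ rfl
  have h := directSum_id_eq_sum (A := A) (fun i => F i)
  unfold IdFactors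
  rw [show (LinearMap.id : ModuleCat.of A (DirectSum (Fin k) fun i => F i) →ₗ[A] _) = _ from h]
  exact sum_mem fun i _ => AddSubgroup.subset_closure ⟨F i, hF i, _, _, rfl⟩

lemma idFactors_pi (T : ModuleCat.{u} A) (m : ℕ) :
    IdFactors (fun N => N = T) (ModuleCat.of A (Fin m → T)) := by
  have h : (LinearMap.id : (Fin m → T) →ₗ[A] (Fin m → T)) =
      ∑ i, LinearMap.single A (fun _ => T) i ∘ₗ LinearMap.proj i := by
    ext i x j
    simp [Pi.single_apply]
  unfold IdFactors
  rw [show (LinearMap.id : ModuleCat.of A (Fin m → T) →ₗ[A] _) = _ from h]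
  exact sum_mem fun i _ => AddSubgroup.subset_closure ⟨T, rfl, _, _, rfl⟩

lemma idFactors_of_subsingleton [Subsingleton M] : IdFactors X M := by
  unfold IdFactors
  rw [show (LinearMap.id : M →ₗ[A] M) = 0 from LinearMap.ext fun x => Subsingleton.elim _ _]
  exact zero_mem _

lemma isSummand_directSum {ι : Type u} (F : ι → ModuleCat.{u} A) (i : ι) :
    IsSummand (F i) (ModuleCat.of A (DirectSum ι fun i => F i)) := by
  classical
  refine ⟨DirectSum.lof A ι (fun i => F i) i, DirectSum.component A ι (fun i => F i) i, ?_⟩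
  ext x
  exact DirectSum.component.lof_self (M := fun i => F i) A i x

end Summands

section KrullSchmidt

variable {A : Type u} [Ring A] [IsArtinianRing A]

variable {X : ModuleCat.{u} A → Prop} {M N : ModuleCat.{u} A}

lemma Indec.isNilpotent_or_isUnit [Module.Finite A M] (hM : Indec M) (f : Module.End A M) :
    IsNilpotent f ∨ IsUnit f := by
  obtain ⟨n, hn⟩ := Filter.eventually_atTop.1 (LinearMap.eventually_isCompl_ker_pow_range_pow f)
  have hc := hn (n + 1) (by lia)
  rcases hM.2 _ (Submodule.isIdempotentElem_projection hc) with h | h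
  · right
    have h1 : LinearMap.ker (f ^ (n + 1)) = ⊥ := by
      rw [← Submodule.range_projection hc, h, LinearMap.range_zero]
    have h2 : LinearMap.range (f ^ (n + 1)) = ⊤ := by
      rw [← Submodule.ker_projection hc, h, LinearMap.ker_zero]
    have : IsUnit (f ^ (n + 1)) := by
      rw [Module.End.isUnit_iff]
      exact ⟨LinearMap.ker_eq_bot.1 h1, LinearMap.range_eq_top.1 h2⟩
    exact (isUnit_pow_iff (by lia)).1 this
  · left
    refine ⟨n + 1, ?_⟩
    rw [← LinearMap.ker_eq_top, ← Submodule.range_projection hc, h, LinearMap.range_id]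

lemma Indec.isUnit_of_isUnit_add [Module.Finite A M] (hM : Indec M) {f g : Module.End A M}
    (h : IsUnit (f + g)) : IsUnit f ∨ IsUnit g := by
  obtain ⟨u, hu⟩ := h
  rcases hM.isNilpotent_or_isUnit (↑u⁻¹ * f) with h | h
  · right
    have : ↑u⁻¹ * g = 1 - ↑u⁻¹ * f := by
      rw [eq_sub_iff_add_eq', ← mul_add, ← hu, Units.inv_mul]
    rw [← Units.isUnit_units_mul u⁻¹, this]
    exact h.isUnit_one_sub
  · left
    rwa [Units.isUnit_units_mul] at h

lemma Indec.exists_isUnit_of_mem_closure [Module.Finite A M] (hM : Indec M)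
    {S : Set (Module.End A M)} {f : Module.End A M} (hf : f ∈ AddSubgroup.closure S)
    (hu : IsUnit f) : ∃ g ∈ S, IsUnit g := by
  induction hf using AddSubgroup.closure_induction with
  | mem f hf => exact ⟨f, hf, hu⟩
  | zero =>
    have : Nontrivial M := not_subsingleton_iff_nontrivial.1 hM.1
    exact absurd hu not_isUnit_zero
  | add f g _ _ hf hg => exact (hM.isUnit_of_isUnit_add hu).elim hf hg
  | neg f _ hf => exact hf (by simpa using hu.neg)

/-- An indecomposable summand of a finite direct sum of indecomposables is isomorphic to one
of them. -/
lemma Indec.exists_equiv_of_idFactors [Module.Finite A M] (hM : Indec M)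
    (h : IdFactors X M) (hX : ∀ N, X N → Indec N) : ∃ N, X N ∧ Nonempty (M ≃ₗ[A] N) := by
  obtain ⟨_, ⟨N, hN, s, r, rfl⟩, hu⟩ :=
    hM.exists_isUnit_of_mem_closure (S := factorSet X M) h isUnit_one
  refine ⟨N, hN, ?_⟩
  obtain ⟨u, hu⟩ := hu
  have h1 : ∀ x, u⁻¹.1 (r (s x)) = x := fun x => by
    have := LinearMap.congr_fun u.inv_mul x
    rw [hu] at this
    exact this
  have h2 : (s ∘ₗ u⁻¹.1 ∘ₗ r) ∘ₗ (s ∘ₗ u⁻¹.1 ∘ₗ r) = s ∘ₗ u⁻¹.1 ∘ₗ r := by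
    ext x
    simp [h1]
  rcases (hX N hN).2 _ h2 with h0 | h0
  · refine absurd ?_ hM.1
    refine subsingleton_of_forall_eq 0 fun x => ?_
    have := LinearMap.congr_fun h0 (s x)
    simp only [LinearMap.comp_apply, LinearMap.zero_apply, h1] at this
    rw [← h1 x, this, map_zero, map_zero]
  · exact ⟨LinearEquiv.ofLinearMap s (u⁻¹.1 ∘ₗ r) h0 (LinearMap.ext h1)⟩

omit [IsArtinianRing A] in
lemma ExtInjInP.of_idFactors [IsNoetherianRing A] {T : ModuleCat.{u} A} (hT : ExtInjInP T)
    (h : IdFactors (fun N => N = T) M) : ExtInjInP M := by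
  obtain ⟨⟨hf, n, hn⟩, h1⟩ := hT
  refine ⟨⟨h.finite fun N hN => hN ▸ hf, n, h.pdLE fun N hN => hN ▸ hn⟩, fun N hN => ?_⟩
  exact h.subsingleton_ext_right N one_pos fun K hK => hK ▸ h1 N hN

/-- Every Ext-injective module in `𝒫` is a direct summand of a finite direct sum of
indecomposable ones. -/
lemma ExtInjInP.idFactors_indec (hM : ExtInjInP M) :
    IdFactors (fun N => Indec N ∧ ExtInjInP N) M := by
  induction hl : Module.length A M using WellFoundedLT.induction generalizing M with
  | ind l ih =>
  subst hl
  have hfin := hM.1.1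
  by_cases h0 : Subsingleton M
  · exact idFactors_of_subsingleton
  by_cases hi : Indec M
  · exact .of_mem ⟨hi, hM⟩
  · simp only [Indec, h0, not_false_eq_true, true_and] at hi
    push Not at hi
    obtain ⟨e, he, he0, he1⟩ := hi
    have key : ∀ e : M →ₗ[A] M, e ∘ₗ e = e → e ≠ LinearMap.id →
        e ∈ AddSubgroup.closure (factorSet (fun N => Indec N ∧ ExtInjInP N) M) := by
      intro e he he1
      have he' : ∀ x, e (e x) = e x := LinearMap.congr_fun he
      have hs : IsSummand (ModuleCat.of A (LinearMap.range e)) M := by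
        refine ⟨(LinearMap.range e).subtype, e.rangeRestrict, ?_⟩
        ext ⟨_, x, rfl⟩
        exact he' x
      have hlt : LinearMap.range e < ⊤ := by
        rw [lt_top_iff_ne_top, ne_eq, LinearMap.range_eq_top]
        intro hsurj
        refine he1 (LinearMap.ext fun x => ?_)
        obtain ⟨y, rfl⟩ := hsurj x
        exact he' y
      exact comp_mem_closure_factorSet
        (ih _ (Submodule.length_lt hlt.ne)
          (M := ModuleCat.of A (LinearMap.range e)) (hM.of_idFactors (.of_isSummand hs)) rfl)
        e.rangeRestrict (LinearMap.range e).subtype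
    have hsub : LinearMap.id - e ≠ LinearMap.id := fun h => he0 (by simpa using h)
    have hsub2 : (LinearMap.id - e) ∘ₗ (LinearMap.id - e) = LinearMap.id - e := by
      simp [LinearMap.sub_comp, LinearMap.comp_sub, he]
    have := add_mem (key e he he1) (key _ hsub2 hsub)
    rwa [add_sub_cancel] at this

end KrullSchmidt

section Coresolutions

variable {A : Type u} [Ring A]

/-- `M` has a finite coresolution by modules in `ω`. -/
inductive FinCoresolved (ω : ModuleCat.{u} A → Prop) : ModuleCat.{u} A → Prop
  | base (M : ModuleCat.{u} A) : ω M → FinCoresolved ω M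
  | step {M Y X : ModuleCat.{u} A} (f : M →ₗ[A] Y) (g : Y →ₗ[A] X) :
      ShortExact f g → ω Y → FinCoresolved ω X → FinCoresolved ω M

lemma FinCoresolved.mono {ω ω' : ModuleCat.{u} A → Prop} {M : ModuleCat.{u} A}
    (h : FinCoresolved ω M) (hω : ∀ N, ω N → ω' N) : FinCoresolved ω' M := by
  induction h with
  | base M hM => exact .base M (hω M hM)
  | step f g hfg hY _ ih => exact .step f g hfg (hω _ hY) ih

lemma HasAddCoresolution.finCoresolved {T L : ModuleCat.{u} A} (h : HasAddCoresolution T L) :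
    FinCoresolved (IdFactors fun N => N = T) L := by
  obtain ⟨C, d, f, hf, hfd, hd, hC, m, hm⟩ := h
  induction m generalizing L C with
  | zero =>
    have := hm 0 le_rfl
    have : Subsingleton L := hf.subsingleton
    exact .base L idFactors_of_subsingleton
  | succ m ih =>
    have hX : Function.Exact (LinearMap.range (d 0)).subtype (d (0 + 1)) := by
      rw [LinearMap.exact_iff, Submodule.range_subtype]
      exact (hd 0).linearMap_ker_eq
    refine .step (X := ModuleCat.of A (LinearMap.range (d 0))) f (d 0).rangeRestrict
      ⟨hf, ?_, LinearMap.surjective_rangeRestrict _⟩ (hC 0).idFactors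
      (ih (fun i => C (i + 1)) (fun i => d (i + 1)) (LinearMap.range (d 0)).subtype
        Subtype.val_injective hX (fun i => hd (i + 1)) (fun i => hC (i + 1))
        fun i hi => hm (i + 1) (by lia))
    rw [LinearMap.exact_iff, LinearMap.ker_rangeRestrict]
    exact hfd.linearMap_ker_eq

lemma FinCoresolved.hasAddCoresolution {T L : ModuleCat.{u} A}
    (h : FinCoresolved (InAddOf fun N => N = T) L) : HasAddCoresolution T L := by
  induction h with
  | base M hM =>
    have hs : ∀ i, 1 ≤ i → Subsingleton ((fun | 0 => M | _ + 1 => ModuleCat.of A PUnit.{u + 1} :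
        ℕ → ModuleCat.{u} A) i) := by
      rintro (_ | i) hi
      · lia
      · exact inferInstanceAs (Subsingleton PUnit)
    refine ⟨fun | 0 => M | _ + 1 => ModuleCat.of A PUnit, fun i => 0, LinearMap.id,
      Function.injective_id, fun x => ?_, fun i x => ?_, ?_, 1, hs⟩
    · simp
    · have := hs (i + 1) (by lia)
      simp only [LinearMap.zero_apply, Set.mem_range, exists_const]
    · rintro (_ | i)
      · exact hM
      · have : Subsingleton (ModuleCat.of A PUnit.{u + 1}) := inferInstanceAs (Subsingleton PUnit)
        exact (idFactors_of_subsingleton (M := ModuleCat.of A PUnit)).inAddOf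
  | @step M Y X f g hfg hY _ ih =>
    obtain ⟨C, d, f', hf, hfd, hd, hC, m, hm⟩ := ih
    refine ⟨fun | 0 => Y | i + 1 => C i, fun | 0 => f' ∘ₗ g | i + 1 => d i, f, hfg.1,
      fun x => ?_, ?_, ?_, m + 1, ?_⟩
    · rw [← hfg.2.1 x]
      exact map_eq_zero_iff f' hf
    · rintro (_ | i) x
      · change d 0 x = 0 ↔ x ∈ Set.range (f' ∘ g)
        rw [hfg.2.2.range_comp f']
        exact hfd x
      · exact hd i x
    · rintro (_ | i)
      · exact hY
      · exact hC i
    · rintro (_ | i) hi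
      · lia
      · exact hm i (by lia)

lemma FinCoresolved.extVanish {ω : ModuleCat.{u} A → Prop} {L Y : ModuleCat.{u} A}
    (h : FinCoresolved ω L) (hY : ∀ N, ω N → ExtVanish N Y) : ExtVanish L Y := by
  induction h with
  | base M hM => exact hY M hM
  | step f g hfg hE _ ih =>
    exact fun i hi => hfg.ext_contravariant₁ Y hi (hY _ hE i hi) (ih (i + 1) (by lia))

lemma IdFactors.extVanish_left {T M Y : ModuleCat.{u} A} (h : IdFactors (fun N => N = T) M)
    (hY : ExtVanish T Y) : ExtVanish M Y :=
  fun i hi => h.subsingleton_ext_left Y hi fun _ hN => hN ▸ hY i hi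

lemma IdFactors.extVanish_right {T M Y : ModuleCat.{u} A} (h : IdFactors (fun N => N = T) M)
    (hY : ExtVanish Y T) : ExtVanish Y M :=
  fun i hi => h.subsingleton_ext_right Y hi fun _ hN => hN ▸ hY i hi

end Coresolutions

section Approximations

variable {A : Type u} [Ring A] (R : Type u) [CommRing R] [IsArtinianRing R] [Algebra R A]
  [Module.Finite R A]

include R in
/-- For finitely generated `T` and `Y`, finitely many homomorphisms `T → Y` suffice to factor all
the others through a power of `T`. -/
lemma exists_fin_factor (T Y : ModuleCat.{u} A) [Module.Finite A T] [Module.Finite A Y] :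
    ∃ (m : ℕ) (p : (Fin m → T) →ₗ[A] Y), ∀ h : T →ₗ[A] Y, ∃ φ : T →ₗ[A] (Fin m → T),
      p ∘ₗ φ = h := by
  let _ : Module R T := Module.compHom T (algebraMap R A)
  let _ : Module R Y := Module.compHom Y (algebraMap R A)
  have : IsScalarTower R A Y := ⟨fun r a x => by rw [Algebra.smul_def, mul_smul]; rfl⟩
  have hT : SMulCommClass A R T := ⟨fun a r x => by
    change a • algebraMap R A r • x = algebraMap R A r • a • x
    rw [smul_smul, smul_smul, Algebra.commutes]⟩
  have hY : SMulCommClass A R Y := ⟨fun a r x => by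
    change a • algebraMap R A r • x = algebraMap R A r • a • x
    rw [smul_smul, smul_smul, Algebra.commutes]⟩
  have : Module.Finite R Y := .trans A Y
  obtain ⟨n, t, ht⟩ := Module.Finite.exists_fin (R := A) (M := T)
  let ev : (T →ₗ[A] Y) →ₗ[R] (Fin n → Y) :=
    { toFun := fun h i => h (t i), map_add' := fun _ _ => rfl, map_smul' := fun _ _ => rfl }
  have hev : Function.Injective ev := fun h h' hh => by
    refine LinearMap.ext_on_range ht fun i => congrFun hh i
  have : IsNoetherian R (T →ₗ[A] Y) := isNoetherian_of_injective ev hev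
  obtain ⟨m, b, hb⟩ := Module.Finite.exists_fin (R := R) (M := T →ₗ[A] Y)
  refine ⟨m, ∑ i, b i ∘ₗ LinearMap.proj i, fun h => ?_⟩
  obtain ⟨c, hc⟩ := (Submodule.mem_span_range_iff_exists_fun R).1 (hb ▸ Submodule.mem_top : h ∈ _)
  refine ⟨LinearMap.pi fun i => c i • LinearMap.id, ?_⟩
  rw [← hc]
  ext x
  simp only [LinearMap.comp_apply, LinearMap.sum_apply, LinearMap.proj_apply, LinearMap.pi_apply,
    LinearMap.smul_apply, LinearMap.id_apply]
  exact Finset.sum_congr rfl fun i _ => (b i).map_smul (algebraMap R A (c i)) x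

variable {T : ModuleCat.{u} A}

include R in
lemma exists_shortExact_pi (hTf : Module.Finite A T) (hTT : ExtVanish T T)
    (hA : FinCoresolved (IdFactors fun N => N = T) (ModuleCat.of A A))
    (Y : ModuleCat.{u} A) [Module.Finite A Y] (hY : ExtVanish T Y) :
    ∃ (m : ℕ) (Y' : ModuleCat.{u} A) (f : Y' →ₗ[A] ModuleCat.of A (Fin m → T))
      (g : ModuleCat.of A (Fin m → T) →ₗ[A] Y), ShortExact f g ∧ Module.Finite A Y' ∧
      ExtVanish T Y' := by
  have : IsArtinian R A := isArtinian_of_fg_of_artinian'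
  have : IsArtinianRing A := isArtinian_of_tower R this
  obtain ⟨m, p, hp⟩ := exists_fin_factor R T Y
  have hrange : ∀ (h : T →ₗ[A] Y) (t : T), h t ∈ LinearMap.range p := fun h t => by
    obtain ⟨φ, rfl⟩ := hp h
    exact ⟨φ t, rfl⟩
  have hE : ∀ (E : ModuleCat.{u} A) (v : E →ₗ[A] Y), IdFactors (fun N => N = T) E →
      ∀ e, v e ∈ LinearMap.range p := by
    intro E v h e
    obtain ⟨k, F, s, r, hF, hid⟩ := h.exists_fin
    have := LinearMap.congr_fun hid e
    rw [LinearMap.id_apply] at this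
    rw [← this, LinearMap.sum_apply, map_sum]
    refine sum_mem fun i _ => ?_
    have key : ∀ (N : ModuleCat.{u} A), N = T → ∀ (w : N →ₗ[A] Y) (x : N),
      w x ∈ LinearMap.range p := by
      rintro _ rfl
      exact hrange
    exact key (F i) (hF i) (v ∘ₗ r i) _
  have hsurj : Function.Surjective p := by
    intro y
    have hlin : (LinearMap.toSpanSingleton A Y y) (1 : A) = y := by simp
    cases hA with
    | base _ h => exact hlin ▸ hE _ (LinearMap.toSpanSingleton A Y y) h (1 : A)
    | step f g hfg hE₀ hX =>
      obtain ⟨v, hv⟩ := hfg.exists_extend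
        (hX.extVanish (fun N hN => hN.extVanish_left hY) 1 one_pos)
        (LinearMap.toSpanSingleton A Y y)
      have : v (f (1 : A)) = y := (LinearMap.congr_fun hv (1 : A)).trans hlin
      exact this ▸ hE _ v hE₀ _
  have hfin : Module.Finite A (ModuleCat.of A (Fin m → T)) :=
    inferInstanceAs (Module.Finite A (Fin m → T))
  have hs := ShortExact.of_surjective (M := ModuleCat.of A (Fin m → T)) p hsurj
  have hTm : ExtVanish T (ModuleCat.of A (Fin m → T)) := (idFactors_pi T m).extVanish_right hTT
  refine ⟨m, _, _, _, hs, hs.finite₁ hfin, fun i hi => ?_⟩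
  obtain ⟨i, rfl⟩ := Nat.exists_eq_succ_of_ne_zero hi.ne'
  rcases Nat.eq_zero_or_pos i with rfl | hi'
  · exact hs.ext_one_left_of_lift T (hTm 1 one_pos) hp
  · exact hs.ext_covariant₁ T hi' (hY i hi') (hTm _ hi)

include R in
/-- If `T` is tilting and Ext-injective in `𝒫`, then `T^⊥ ⊆ 𝒫^⊥`. -/
lemma extVanish_of_inP (hT : ExtInjInP T)
    (hA : FinCoresolved (IdFactors fun N => N = T) (ModuleCat.of A A))
    (Y : ModuleCat.{u} A) [hYf : Module.Finite A Y] (hY : ExtVanish T Y) {N : ModuleCat.{u} A}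
    (hN : InP N) : ExtVanish N Y := by
  have : IsArtinian R A := isArtinian_of_fg_of_artinian'
  have : IsArtinianRing A := isArtinian_of_tower R this
  have hNT : ∀ {N}, InP N → ExtVanish N T := fun hN => ExtInjInP.extVanish hT.2 hN
  obtain ⟨d, hd⟩ := hN.2
  have key : ∀ (k : ℕ) (Y : ModuleCat.{u} A), Module.Finite A Y → ExtVanish T Y →
      ∀ i, 0 < i → d < i + k → Subsingleton (ext N Y i) := by
    intro k
    induction k with
    | zero => exact fun Y _ _ i _ hdi => hd i hdi Y
    | succ k ih =>
      intro Y hYf hY i hi hdi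
      obtain ⟨m, Y', f, g, hfg, hY'f, hY'⟩ := exists_shortExact_pi R hT.1.1 (hNT hT.1) hA Y hY
      exact hfg.ext_covariant₃ N hi ((idFactors_pi T m).extVanish_right (hNT hN) i hi)
        (ih Y' hY'f hY' (i + 1) (by lia) (by lia))
  exact fun i hi => key d Y hYf hY i hi (by lia)

lemma inP_pi (hT : InP T) (m : ℕ) : InP (ModuleCat.of A (Fin m → T)) := by
  obtain ⟨hf, n, hn⟩ := hT
  exact ⟨inferInstanceAs (Module.Finite A (Fin m → T)), n,
    (idFactors_pi T m).pdLE fun N hN => hN ▸ hn⟩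

include R in
lemma exists_perp_envelope (hT : ExtInjInP T)
    (hA : FinCoresolved (IdFactors fun N => N = T) (ModuleCat.of A A)) (k : ℕ)
    (K : ModuleCat.{u} A) [Module.Finite A K] (hK : ∀ i, k < i → Subsingleton (ext T K i)) :
    ∃ (W Z : ModuleCat.{u} A) (f : K →ₗ[A] W) (g : W →ₗ[A] Z), ShortExact f g ∧
      Module.Finite A W ∧ ExtVanish T W ∧ InP Z := by
  have : IsArtinian R A := isArtinian_of_fg_of_artinian'
  have : IsArtinianRing A := isArtinian_of_tower R this
  induction k generalizing K with
  | zero =>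
    have : Module.Projective A (ModuleCat.of A PUnit.{u + 1}) :=
      inferInstanceAs (Module.Projective A PUnit.{u + 1})
    have : Module.Finite A (ModuleCat.of A PUnit.{u + 1}) :=
      inferInstanceAs (Module.Finite A PUnit.{u + 1})
    exact ⟨K, ModuleCat.of A PUnit, LinearMap.id, 0, ⟨Function.injective_id,
      fun x => by simp, fun x => ⟨0, rfl⟩⟩, inferInstance, hK, inP_of_projective _⟩
  | succ k ih =>
    obtain ⟨I, i, hIf, hI, hi⟩ := exists_finite_injective R K
    have hKI := ShortExact.of_injective i hi
    have hZf := hKI.finite₃ hIf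
    obtain ⟨Y, X, a, b, hab, hYf, hY, hX⟩ := ih (ModuleCat.of A (I ⧸ LinearMap.range i))
      fun j hj => hKI.ext_covariant₃ T (by lia) (subsingleton_ext_of_injective T I (by lia))
        (hK (j + 1) (by lia))
    obtain ⟨m, Y', f, g, hfg, hY'f, hY'⟩ :=
      exists_shortExact_pi R hT.1.1 (ExtInjInP.extVanish hT.2 hT.1) hA Y hY
    obtain ⟨Z, f', g', j, hZ, -, -, hZX⟩ := hfg.exists_pullback a
    have hZP : InP Z := (hZX X b hab).inP₁ (inP_pi hT.1 m) hX
    obtain ⟨W, f'', g'', j', hW, -, hW', -⟩ := hKI.exists_pullback g'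
    obtain ⟨k', hk'⟩ := hW' Y' f' hZ
    exact ⟨W, Z, f'', g'', hW, hW.finite₂ inferInstance hZP.1, fun l hl =>
      hk'.ext_covariant₂ T hl (hY' l hl) (subsingleton_ext_of_injective T I hl), hZP⟩

include R in
lemma contravariantlyFinite_of_finCoresolved (hT : ExtInjInP T)
    (hA : FinCoresolved (IdFactors fun N => N = T) (ModuleCat.of A A)) :
    ContravariantlyFinite (fun M : ModuleCat.{u} A => InP M) := by
  have : IsArtinian R A := isArtinian_of_fg_of_artinian'
  have : IsArtinianRing A := isArtinian_of_tower R this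
  intro M hM
  obtain ⟨K, Q, f, g, hfg, hK, hQ, hQp⟩ := exists_free_presentation M
  obtain ⟨n, hn⟩ := hT.1.2
  obtain ⟨W, Z, a, b, hab, hWf, hW, hZ⟩ :=
    exists_perp_envelope R hT hA n K fun i hi => hn i hi K
  obtain ⟨B, f', g', j, hB, -, -, -, hB'⟩ := hfg.exists_pushout a
  obtain ⟨q, hq⟩ := hB' Z b hab
  refine ⟨B, g', hq.inP₂ (inP_of_projective Q) hZ, fun Y hY u => ?_⟩
  exact hB.exists_lift (extVanish_of_inP R hT hA W hW hY 1 one_pos) u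

end Approximations

section MinimalApproximations

variable {A : Type u} [Ring A] [IsArtinianRing A]

lemma exists_isMinimalRightApprox {M : ModuleCat.{u} A}
    (h : ∃ (X : ModuleCat.{u} A) (f : X →ₗ[A] M), IsRightApprox (fun N => InP N) f) :
    ∃ (X : ModuleCat.{u} A) (f : X →ₗ[A] M), IsMinimalRightApprox (fun N => InP N) f := by
  obtain ⟨l, ⟨X, f, hf, hl⟩, hmin⟩ := WellFounded.has_min (wellFounded_lt (α := ℕ∞))
    {l | ∃ (X : ModuleCat.{u} A) (f : X →ₗ[A] M), IsRightApprox (fun N => InP N) f ∧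
      Module.length A X = l} (by obtain ⟨X, f, hf⟩ := h; exact ⟨_, X, f, hf, rfl⟩)
  refine ⟨X, f, hf, fun g hg => ?_⟩
  obtain ⟨⟨hX, d, hd⟩, happ⟩ := hf
  obtain ⟨n, hn⟩ := Filter.eventually_atTop.1 (LinearMap.eventually_isCompl_ker_pow_range_pow g)
  have hc := hn (n + 1) (by lia)
  have hpow : ∀ k, f ∘ₗ (g ^ k) = f := by
    intro k
    induction k with
    | zero => rfl
    | succ k ih => rw [pow_succ', Module.End.mul_eq_comp, ← LinearMap.comp_assoc, hg, ih]
  let X' := ModuleCat.of A (LinearMap.range (g ^ (n + 1)))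
  have hs : IsSummand X' X :=
    ⟨(LinearMap.range (g ^ (n + 1))).subtype, Submodule.projectionOnto _ _ hc.symm,
      LinearMap.ext fun x => Submodule.projectionOnto_apply_left hc.symm x⟩
  have hX' : InP X' := ⟨(IdFactors.of_isSummand hs).finite fun N hN => hN ▸ hX, d,
    (IdFactors.of_isSummand hs).pdLE fun N hN => hN ▸ hd⟩
  have htop : LinearMap.range (g ^ (n + 1)) = ⊤ := by
    by_contra hne
    refine hmin (Module.length A X') ⟨X', f ∘ₗ (LinearMap.range (g ^ (n + 1))).subtype,
      ⟨hX', fun Y hY u => ?_⟩, rfl⟩ (hl ▸ Submodule.length_lt hne)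
    obtain ⟨v, hv⟩ := happ Y hY u
    refine ⟨(g ^ (n + 1)).rangeRestrict ∘ₗ v, ?_⟩
    ext y
    have := LinearMap.congr_fun (hpow (n + 1)) (v y)
    simp only [LinearMap.comp_apply] at this
    rw [← hv]
    exact this
  refine IsNoetherian.bijective_of_surjective_endomorphism g ?_
  intro x
  obtain ⟨y, rfl⟩ := LinearMap.range_eq_top.1 htop x
  exact ⟨(g ^ n) y, by rw [pow_succ']; rfl⟩

/-- Wakamatsu's lemma for `𝒫`: the kernel of a minimal right `𝒫`-approximation lies in `𝒫^⊥`. -/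
lemma IsMinimalRightApprox.extVanish_ker {M X : ModuleCat.{u} A} {f : X →ₗ[A] M}
    (hf : IsMinimalRightApprox (fun N => InP N) f) {N : ModuleCat.{u} A} (hN : InP N) :
    ExtVanish N (ModuleCat.of A (LinearMap.ker f)) := by
  obtain ⟨⟨hX, happ⟩, hmin⟩ := hf
  refine ExtInjInP.extVanish (fun N hN => ?_) hN
  have := hN.1
  obtain ⟨K, Q, a, b, hab, hK, hQ, hQp⟩ := exists_free_presentation N
  refine hab.ext_one_right_of_extend _ (subsingleton_ext_of_projective Q _ one_pos) fun u => ?_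
  obtain ⟨B, f', g', j, hB, -, hj, huniv, -⟩ :=
    hab.exists_pushout ((LinearMap.ker f).subtype ∘ₗ u)
  obtain ⟨c, hc, hc'⟩ := huniv M f 0 (by ext x; simp)
  obtain ⟨h, hh⟩ := happ B (hB.inP₂ hX hN) c
  have hfix : f ∘ₗ (h ∘ₗ f') = f := by rw [← LinearMap.comp_assoc, hh, hc]
  let e : X ≃ₗ[A] X := LinearEquiv.ofBijective _ (hmin _ hfix)
  have he : ∀ x, f (e.symm x) = f x := fun x => by
    obtain ⟨y, rfl⟩ := e.surjective x
    rw [e.symm_apply_apply]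
    exact (LinearMap.congr_fun hfix y).symm
  have hker : ∀ q, e.symm (h (j q)) ∈ LinearMap.ker f := fun q => by
    rw [LinearMap.mem_ker, he, show f (h (j q)) = c (j q) from LinearMap.congr_fun hh _]
    exact LinearMap.congr_fun hc' q
  refine ⟨(e.symm.toLinearMap ∘ₗ h ∘ₗ j).codRestrict _ hker, ?_⟩
  ext x
  change e.symm (h (j (a x))) = _
  rw [e.symm_apply_eq, show j (a x) = _ from LinearMap.congr_fun hj x]
  rfl

end MinimalApproximations

section SpecialApproximations

variable {A : Type u} [Ring A]

/-- `M` has a surjective right `𝒫`-approximation by a module of projective dimension at most `n`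
with kernel in `𝒫^⊥`. -/
def HasSpecialApprox (n : ℕ) (M : ModuleCat.{u} A) : Prop :=
  ∃ (Y X : ModuleCat.{u} A) (f : Y →ₗ[A] X) (g : X →ₗ[A] M), ShortExact f g ∧
    (∀ N, InP N → ExtVanish N Y) ∧ InP X ∧ pdLE X n

lemma HasSpecialApprox.mono {m n : ℕ} {M : ModuleCat.{u} A} (h : HasSpecialApprox m M)
    (hmn : m ≤ n) : HasSpecialApprox n M := by
  obtain ⟨Y, X, f, g, hfg, hY, hX, hd⟩ := h
  exact ⟨Y, X, f, g, hfg, hY, hX, hd.mono hmn⟩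

lemma HasSpecialApprox.of_equiv {n : ℕ} {M M' : ModuleCat.{u} A} (h : HasSpecialApprox n M)
    (e : M ≃ₗ[A] M') : HasSpecialApprox n M' := by
  obtain ⟨Y, X, f, g, ⟨h1, h2, h3⟩, hY, hX, hd⟩ := h
  refine ⟨Y, X, f, e.toLinearMap ∘ₗ g, ⟨h1, fun x => ?_, e.surjective.comp h3⟩, hY, hX, hd⟩
  rw [← h2 x]
  exact e.map_eq_zero_iff

lemma hasSpecialApprox_of_subsingleton (n : ℕ) (M : ModuleCat.{u} A) [Subsingleton M] :
    HasSpecialApprox n M := by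
  have hM : Module.Projective A M := Module.Projective.of_equiv (0 : PUnit.{u + 1} ≃ₗ[A] M)
  refine ⟨M, M, LinearMap.id, 0, ⟨Function.injective_id, fun x => ?_, fun x => ⟨0, ?_⟩⟩,
    fun N hN i hi => ?_, inP_of_projective M, (pdLE_of_projective M).mono (Nat.zero_le n)⟩
  · exact ⟨fun _ => ⟨x, rfl⟩, fun _ => rfl⟩
  · exact Subsingleton.elim _ _
  · exact (idFactors_of_subsingleton (X := fun _ => False)).subsingleton_ext_right N hi
      fun _ h => h.elim

/-- A relative horseshoe lemma: special approximations of the outer terms of a short exact sequence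
give one of the middle term. -/
lemma ShortExact.hasSpecialApprox [IsNoetherianRing A] {n : ℕ} {M₁ M₂ M₃ : ModuleCat.{u} A}
    {f : M₁ →ₗ[A] M₂} {g : M₂ →ₗ[A] M₃} (h : ShortExact f g) (h₁ : HasSpecialApprox n M₁)
    (h₃ : HasSpecialApprox n M₃) : HasSpecialApprox n M₂ := by
  obtain ⟨Y₁, X₁, a₁, b₁, hab₁, hY₁, hX₁, hd₁⟩ := h₁
  obtain ⟨Y₃, X₃, a₃, b₃, hab₃, hY₃, hX₃, hd₃⟩ := h₃
  obtain ⟨B, i, p, d, hB, -, hB', -⟩ := h.exists_pullback b₃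
  obtain ⟨k, hk⟩ := hB' Y₃ a₃ hab₃
  have := hX₃.1
  obtain ⟨K, Q, s, t, hst, hK, hQ, hQp⟩ := exists_free_presentation X₃
  obtain ⟨v, hv⟩ := hB.exists_lift (subsingleton_ext_of_projective Q M₁ one_pos) t
  have hvs : ∀ x, ∃ y, i y = v (s x) := fun x => by
    refine (hB.2.1 _).1 ?_
    rw [show p (v (s x)) = t (s x) from LinearMap.congr_fun hv _, hst.2.1.apply_apply_eq_zero]
  let iEquiv := LinearEquiv.ofInjective i hB.1
  let w : K →ₗ[A] M₁ := iEquiv.symm.toLinearMap ∘ₗ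
    (v ∘ₗ s).codRestrict (LinearMap.range i) hvs
  have hw : i ∘ₗ w = v ∘ₗ s := by
    ext x
    have : iEquiv (w x) = ⟨v (s x), hvs x⟩ := iEquiv.apply_symm_apply _
    exact congrArg Subtype.val this
  obtain ⟨w', hw'⟩ := hab₁.exists_lift
    (hY₁ K (hst.inP₁ (inP_of_projective Q) hX₃) 1 one_pos) w
  obtain ⟨X, f', g', j, hX, hjt, hj, huniv, -⟩ := hst.exists_pushout w'
  obtain ⟨c, hc, hc'⟩ := huniv B (i ∘ₗ b₁) v (by
    rw [LinearMap.comp_assoc, hw', hw])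
  have hpc : ∀ x, p (c x) = g' x := by
    intro x
    obtain ⟨q, hq⟩ := hst.2.2 (g' x)
    have h1 : g' (x - j q) = 0 := by
      rw [map_sub, show g' (j q) = t q from LinearMap.congr_fun hjt q, hq, sub_self]
    obtain ⟨y, hy⟩ := (hX.2.1 _).1 h1
    rw [eq_sub_iff_add_eq] at hy
    rw [← hy, map_add, map_add, map_add,
      show c (f' y) = i (b₁ y) from LinearMap.congr_fun hc y,
      show c (j q) = v q from LinearMap.congr_fun hc' q, hB.2.1.apply_apply_eq_zero,
      hX.2.1.apply_apply_eq_zero, show p (v q) = t q from LinearMap.congr_fun hv q,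
      show g' (j q) = t q from LinearMap.congr_fun hjt q]
  have hcf : ∀ y, c (f' y) = i (b₁ y) := LinearMap.congr_fun hc
  have hXB : ShortExact (f' ∘ₗ a₁) c := by
    refine ⟨hX.1.comp hab₁.1, fun x => ⟨fun hx => ?_, ?_⟩, fun y => ?_⟩
    · obtain ⟨y, rfl⟩ := (hX.2.1 x).1 (by rw [← hpc, hx, map_zero])
      rw [hcf] at hx
      obtain ⟨z, rfl⟩ := (hab₁.2.1 y).1 (hB.1 (by rw [hx, map_zero]))
      exact ⟨z, rfl⟩
    · rintro ⟨z, rfl⟩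
      rw [LinearMap.comp_apply, hcf, hab₁.2.1.apply_apply_eq_zero, map_zero]
    · obtain ⟨x, hx⟩ := hX.2.2 (p y)
      obtain ⟨m, hm⟩ := (hB.2.1 (y - c x)).1 (by rw [map_sub, hpc, hx, sub_self])
      obtain ⟨z, rfl⟩ := hab₁.2.2 m
      exact ⟨f' z + x, by rw [map_add, hcf, hm, sub_add_cancel]⟩
  obtain ⟨Y, f'', g'', j', hY, -, -, hY'⟩ := hXB.exists_pullback k
  exact ⟨Y, X, j', d ∘ₗ c, hY' M₂ d hk,
    fun N hN l hl => hY.ext_covariant₂ N hl (hY₁ N hN l hl) (hY₃ N hN l hl),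
    hX.inP₂ hX₁ hX₃, hX.pdLE₂ hd₁ hd₃⟩

lemma HasSpecialApprox.pdLE {n : ℕ} {M : ModuleCat.{u} A} (h : HasSpecialApprox n M)
    (hM : InP M) : pdLE M n := by
  obtain ⟨Y, X, f, g, hfg, hY, hX, hd⟩ := h
  obtain ⟨v, hv⟩ := hfg.exists_lift (hY M hM 1 one_pos) LinearMap.id
  exact (IdFactors.of_isSummand ⟨v, g, hv⟩).pdLE fun N hN => hN ▸ hd

variable [IsArtinianRing A]

lemma ContravariantlyFinite.exists_hasSpecialApprox
    (hP : ContravariantlyFinite (fun M : ModuleCat.{u} A => InP M)) (M : ModuleCat.{u} A)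
    [hM : Module.Finite A M] : ∃ n, HasSpecialApprox n M := by
  obtain ⟨X, f, hf⟩ := exists_isMinimalRightApprox (hP M hM)
  obtain ⟨n, hn⟩ := hf.1.1.2
  obtain ⟨K, Q, a, b, hab, hK, hQ, hQp⟩ := exists_free_presentation M
  obtain ⟨v, rfl⟩ := hf.1.2 Q (inP_of_projective Q) b
  have hsurj : Function.Surjective f := fun x => by
    obtain ⟨y, rfl⟩ := hab.2.2 x
    exact ⟨v y, rfl⟩
  exact ⟨n, _, X, _, f, .of_surjective f hsurj, fun N hN => hf.extVanish_ker hN, hf.1.1, hn⟩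

lemma ContravariantlyFinite.exists_bound_simple
    (hP : ContravariantlyFinite (fun M : ModuleCat.{u} A => InP M)) {M : Type u}
    [AddCommGroup M] [Module A M] (hM : IsFiniteLength A M) :
    ∃ n, ∀ S : ModuleCat.{u} A, IsSimpleModule A S → (∃ h : M →ₗ[A] S, h ≠ 0) →
      HasSpecialApprox n S := by
  induction hM with
  | of_subsingleton =>
    refine ⟨0, fun S _ ⟨h, hh⟩ => (hh ?_).elim⟩
    ext x
    rw [Subsingleton.elim x 0, map_zero, map_zero]
  | @of_simple_quotient M _ _ N _ hN ih =>
    obtain ⟨m, hm⟩ := ih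
    have : Module.Finite A (ModuleCat.of A (M ⧸ N)) := inferInstanceAs (Module.Finite A (M ⧸ N))
    obtain ⟨n, hn⟩ := hP.exists_hasSpecialApprox (ModuleCat.of A (M ⧸ N))
    refine ⟨max m n, fun S hS ⟨h, hh⟩ => ?_⟩
    by_cases h0 : h ∘ₗ N.subtype = 0
    · have hle : N ≤ LinearMap.ker h := fun x hx => LinearMap.congr_fun h0 ⟨x, hx⟩
      have hne : N.liftQ h hle ≠ 0 := fun h1 => hh (by
        rw [← N.liftQ_mkQ h hle, h1, LinearMap.zero_comp])
      exact (hn.of_equiv (LinearEquiv.ofBijective _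
        (LinearMap.bijective_of_ne_zero hne))).mono (le_max_right _ _)
    · exact (hm S hS ⟨_, h0⟩).mono (le_max_left _ _)

lemma ContravariantlyFinite.exists_bound
    (hP : ContravariantlyFinite (fun M : ModuleCat.{u} A => InP M)) :
    ∃ n, ∀ M : ModuleCat.{u} A, Module.Finite A M → HasSpecialApprox n M := by
  have hA : IsFiniteLength A A := isFiniteLength_iff_isNoetherian_isArtinian.2
    ⟨inferInstance, inferInstance⟩
  obtain ⟨n, hn⟩ := hP.exists_bound_simple hA
  have hS : ∀ S : ModuleCat.{u} A, IsSimpleModule A S → HasSpecialApprox n S := by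
    intro S hS
    have := hS.nontrivial
    obtain ⟨x, hx⟩ := exists_ne (0 : S)
    refine hn S hS ⟨LinearMap.toSpanSingleton A S x, fun h => hx ?_⟩
    simpa using LinearMap.congr_fun h 1
  have key : ∀ {M : Type u} [AddCommGroup M] [Module A M], IsFiniteLength A M →
      HasSpecialApprox n (ModuleCat.of A M) := by
    intro M _ _ hM
    induction hM with
    | @of_subsingleton M _ _ _ =>
      have : Subsingleton (ModuleCat.of A M) := inferInstanceAs (Subsingleton M)
      exact hasSpecialApprox_of_subsingleton n _
    | @of_simple_quotient M _ _ N _ _ ih =>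
      have h : ShortExact (M₁ := ModuleCat.of A N) (M₂ := ModuleCat.of A M)
          (M₃ := ModuleCat.of A (M ⧸ N)) N.subtype N.mkQ :=
        ⟨Subtype.val_injective, LinearMap.exact_subtype_mkQ N, N.mkQ_surjective⟩
      exact h.hasSpecialApprox ih (hS _ ‹_›)
  exact ⟨n, fun M hM => key (M := M) (isFiniteLength_iff_isNoetherian_isArtinian.2
    ⟨inferInstance, inferInstance⟩)⟩

end SpecialApproximations

section Tilting

variable {A : Type u} [Ring A] (R : Type u) [CommRing R] [IsArtinianRing R] [Algebra R A]
  [Module.Finite R A]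

include R in
lemma finCoresolved_of_hasSpecialApprox {n : ℕ}
    (hP : ∀ M : ModuleCat.{u} A, Module.Finite A M → HasSpecialApprox n M) (k : ℕ)
    {M : ModuleCat.{u} A} (hM : InP M)
    (hk : ∀ N, InP N → ∀ i, k < i → Subsingleton (ext N M i)) : FinCoresolved ExtInjInP M := by
  have : IsArtinian R A := isArtinian_of_fg_of_artinian'
  have : IsArtinianRing A := isArtinian_of_tower R this
  induction k generalizing M with
  | zero => exact .base M ⟨hM, fun N hN => hk N hN 1 one_pos⟩
  | succ k ih =>
    have := hM.1
    obtain ⟨I, i, hIf, hI, hi⟩ := exists_finite_injective R M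
    have hMI := ShortExact.of_injective i hi
    obtain ⟨Y₀, X, a, b, hab, hY₀, hX, -⟩ := hP _ (hMI.finite₃ hIf)
    obtain ⟨Y, f, g, j, hY, -, hY', -⟩ := hMI.exists_pullback b
    obtain ⟨c, hc⟩ := hY' Y₀ a hab
    have hYperp : ∀ N, InP N → ExtVanish N Y := fun N hN l hl =>
      hc.ext_covariant₂ N hl (hY₀ N hN l hl) (subsingleton_ext_of_injective N I hl)
    refine .step f g hY ⟨hY.inP₂ hM hX, fun N hN => hYperp N hN 1 one_pos⟩
      (ih hX fun N hN l hl => ?_)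
    exact hY.ext_covariant₃ N (by lia) (hYperp N hN l (by lia)) (hk N hN (l + 1) (by lia))

lemma ExtInjInP.prod {M N : ModuleCat.{u} A} (hM : ExtInjInP M) (hN : ExtInjInP N) :
    ExtInjInP (ModuleCat.of A (M × N)) := by
  have h : ShortExact (M₂ := ModuleCat.of A (M × N)) (LinearMap.inl A M N)
      (LinearMap.snd A M N) :=
    ⟨LinearMap.inl_injective, Function.Exact.inl_snd, LinearMap.snd_surjective⟩
  exact ⟨h.inP₂ hM.1 hN.1, fun K hK => h.ext_covariant₂ K one_pos (hM.2 K hK) (hN.2 K hK)⟩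

lemma FinCoresolved.exists_extInjInP {M : ModuleCat.{u} A} (h : FinCoresolved ExtInjInP M) :
    ∃ T : ModuleCat.{u} A, ExtInjInP T ∧ FinCoresolved (IdFactors fun N => N = T) M := by
  induction h with
  | base M hM => exact ⟨M, hM, .base M (.of_mem rfl)⟩
  | @step M Y X f g hfg hY _ ih =>
    obtain ⟨T, hT, hX⟩ := ih
    have h1 : IsSummand Y (ModuleCat.of A (Y × T)) :=
      ⟨LinearMap.inl A Y T, LinearMap.fst A Y T, LinearMap.fst_comp_inl A Y T⟩
    have h2 : IsSummand T (ModuleCat.of A (Y × T)) :=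
      ⟨LinearMap.inr A Y T, LinearMap.snd A Y T, LinearMap.snd_comp_inr A Y T⟩
    refine ⟨ModuleCat.of A (Y × T), hY.prod hT, .step f g hfg (.of_isSummand h1)
      (hX.mono fun N hN => hN.trans ?_)⟩
    rintro _ rfl
    exact .of_isSummand h2

include R in
/-- Every Ext-injective module in `𝒫` is a summand of a power of `T`. -/
lemma ExtInjInP.idFactors {T W : ModuleCat.{u} A} (hT : ExtInjInP T)
    (hA : FinCoresolved (IdFactors fun N => N = T) (ModuleCat.of A A)) (hW : ExtInjInP W) :
    IdFactors (fun N => N = T) W := by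
  have : IsArtinian R A := isArtinian_of_fg_of_artinian'
  have : IsArtinianRing A := isArtinian_of_tower R this
  have := hW.1.1
  obtain ⟨m, Y', f, g, hfg, hY'f, hY'⟩ := exists_shortExact_pi R hT.1.1
    (ExtInjInP.extVanish hT.2 hT.1) hA W (ExtInjInP.extVanish hW.2 hT.1)
  obtain ⟨v, hv⟩ := hfg.exists_lift (extVanish_of_inP R hT hA Y' hY' hW.1 1 one_pos) LinearMap.id
  refine (IdFactors.of_isSummand ⟨v, g, hv⟩).trans ?_
  rintro _ rfl
  exact idFactors_pi T m

variable {ι : Type u} {F : ι → ModuleCat.{u} A}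

lemma IsCompleteExtInjFamily.idFactors [IsArtinianRing A] (hF : IsCompleteExtInjFamily F)
    {M : ModuleCat.{u} A} (hM : ExtInjInP M) : IdFactors (fun N => ∃ i, N = F i) M := by
  refine hM.idFactors_indec.trans fun N hN => ?_
  obtain ⟨i, ⟨e⟩⟩ := hF.2.1 N hN.1 hN.2
  refine (IdFactors.of_isSummand (N := F i) ⟨e.toLinearMap, e.symm.toLinearMap, by simp⟩).trans ?_
  rintro _ rfl
  exact .of_mem ⟨i, rfl⟩

lemma IsCompleteExtInjFamily.finite [IsArtinianRing A] (hF : IsCompleteExtInjFamily F)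
    {T : ModuleCat.{u} A} (hT : ExtInjInP T)
    (h : ∀ W, ExtInjInP W → IdFactors (fun N => N = T) W) : Finite ι := by
  obtain ⟨k, G, s, r, hG, hid⟩ := (hF.idFactors hT).exists_fin
  choose σ hσ using hG
  have hT' : IdFactors (fun N => ∃ j, N = F (σ j)) T := by
    unfold IdFactors
    rw [← hid]
    exact sum_mem fun j _ => AddSubgroup.subset_closure ⟨G j, ⟨j, hσ j⟩, s j, r j, rfl⟩
  refine Finite.of_surjective σ fun i => ?_
  obtain ⟨hi, hi'⟩ := hF.1 i
  have := hi'.1.1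
  have h2 : IdFactors (fun N => ∃ j, N = F (σ j)) (F i) :=
    (h (F i) hi').trans (by rintro _ rfl; exact hT')
  obtain ⟨_, ⟨j, rfl⟩, e⟩ := hi.exists_equiv_of_idFactors h2 (by
    rintro _ ⟨j, rfl⟩; exact (hF.1 (σ j)).1)
  exact ⟨j, (hF.2.2 i (σ j) e).symm⟩

lemma finite_of_finite_directSum (hF : ∀ i, ¬ Subsingleton (F i))
    (h : Module.Finite A (DirectSum ι fun i => F i)) : Finite ι := by
  classical
  obtain ⟨n, s, hs⟩ := Module.Finite.exists_fin (R := A) (M := DirectSum ι fun i => F i)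
  have hsub : (Set.univ : Set ι) ⊆ ⋃ j, ((DFinsupp.support (s j) : Finset ι) : Set ι) := by
    intro i _
    by_contra hi
    simp only [Set.mem_iUnion, not_exists, Finset.mem_coe, DFinsupp.mem_support_iff,
      not_not] at hi
    have h0 : DirectSum.component A ι (fun i => F i) i = 0 :=
      LinearMap.ext_on_range hs fun j => hi j
    refine hF i (subsingleton_of_forall_eq 0 fun x => ?_)
    rw [← DirectSum.component.lof_self (M := fun i => F i) A i x, h0]
    rfl
  exact Set.finite_univ_iff.1 ((Set.finite_iUnion fun j => Finset.finite_toSet _).subset hsub)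

include R in
theorem contravariantlyFinite_iff_isTilting (hF : IsCompleteExtInjFamily F) :
    ContravariantlyFinite (fun M : ModuleCat.{u} A => InP M) ↔
      IsTilting (ModuleCat.of A (DirectSum ι (fun i => ↥(F i)))) := by
  have : IsArtinian R A := isArtinian_of_fg_of_artinian'
  have : IsArtinianRing A := isArtinian_of_tower R this
  constructor
  · intro hP
    obtain ⟨n, hn⟩ := hP.exists_bound
    have : Module.Projective A (ModuleCat.of A A) := inferInstanceAs (Module.Projective A A)
    have : Module.Finite A (ModuleCat.of A A) := inferInstanceAs (Module.Finite A A)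
    obtain ⟨T, hT, hA⟩ := (finCoresolved_of_hasSpecialApprox R hn n
      (inP_of_projective (ModuleCat.of A A)) fun N hN i hi =>
        (hn N hN.1).pdLE hN i hi _).exists_extInjInP
    have hadd : ∀ W, ExtInjInP W → IdFactors (fun N => N = T) W :=
      fun W hW => hT.idFactors R hA hW
    have := hF.finite hT hadd
    have hE : ExtInjInP (ModuleCat.of A (DirectSum ι fun i => F i)) := by
      refine hT.of_idFactors ((idFactors_directSum F).trans ?_)
      rintro _ ⟨i, rfl⟩
      exact hadd _ (hF.1 i).2
    refine ⟨hE.1.1, hE.1.2, ExtInjInP.extVanish hE.2 hE.1,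
      (hA.mono fun N hN => IdFactors.inAddOf ?_).hasAddCoresolution⟩
    refine hN.trans ?_
    rintro _ rfl
    refine (hF.idFactors hT).trans ?_
    rintro _ ⟨i, rfl⟩
    exact .of_isSummand (isSummand_directSum F i)
  · rintro ⟨hE, hpd, -, hA⟩
    have := finite_of_finite_directSum (fun i => (hF.1 i).1.1) hE
    refine contravariantlyFinite_of_finCoresolved R ⟨⟨hE, hpd⟩, fun N hN => ?_⟩ hA.finCoresolved
    refine (idFactors_directSum F).subsingleton_ext_right N one_pos ?_
    rintro _ ⟨i, rfl⟩
    exact (hF.1 i).2.2 N hN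

end Tilting

/-- `𝒫` is contravariantly finite iff the direct sum of a complete set of
representatives of the indecomposable Ext-injective modules in `𝒫` is a tilting module. -/
theorem stmt_9 (Λ : Type u) [Ring Λ] (R : Type u) [CommRing R] [IsArtinianRing R]
    [Algebra R Λ] [Module.Finite R Λ]
    {ι : Type u} (F : ι → ModuleCat.{u} Λᵐᵒᵖ) (hF : IsCompleteExtInjFamily F) :
    ContravariantlyFinite (fun M : ModuleCat.{u} Λᵐᵒᵖ => InP M) ↔
      IsTilting (ModuleCat.of Λᵐᵒᵖ (DirectSum ι (fun i => ↥(F i)))) := by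
  have : Module.Finite R Λᵐᵒᵖ := Module.Finite.equiv (MulOpposite.opLinearEquiv R)
  exact contravariantlyFinite_iff_isTilting R hF
end

section
/- Let Λ be an artin algebra, P the class of finitely generated right Λ-modules of finite projective dimension, assumed contravariantly finite, and let E be the direct sum of the indecomposable Ext-injective modules in P. Then the finitistic dimension of Λ equals the projective dimension of E. -/
open CategoryTheory

universe u

namespace ArtinTilting

open Abelian

variable {A : Type u} [Ring A]

theorem subsingleton_ext_succ_iff (M N : ModuleCat.{u} A) (n : ℕ) :
    Subsingleton (ext M N (n + 1)) ↔ Subsingleton (Abelian.Ext.{u} M N (n + 1)) := by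
  let P : ProjectiveResolution M := ProjectiveResolution.of M
  trans ∀ f : P.complex.X (n + 1) ⟶ N, P.complex.d (n + 2) (n + 1) ≫ f = 0 →
      ∃ g : P.complex.X n ⟶ N, P.complex.d (n + 1) n ≫ g = f
  · have e := P.isoExt (R := ℤ) (n + 1) N
    rw [(e.toLinearEquiv.toEquiv).subsingleton_congr, ← ModuleCat.isZero_iff_subsingleton,
      ← HomologicalComplex.exactAt_iff_isZero_homology,
      HomologicalComplex.exactAt_iff' _ n (n + 1) (n + 2) (by simp) (by simp),
      ShortComplex.moduleCat_exact_iff]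
    exact Iff.rfl
  · constructor
    · intro h
      refine subsingleton_of_forall_eq 0 fun α => ?_
      obtain ⟨f, hf, rfl⟩ := P.extMk_surjective α (n + 2) rfl
      rw [P.extMk_eq_zero_iff f _ rfl hf n rfl]
      exact h f hf
    · intro h f hf
      rw [← P.extMk_eq_zero_iff f (n + 2) rfl hf n rfl]
      exact Subsingleton.elim _ _

theorem pdLE_iff_hasProjectiveDimensionLT (M : ModuleCat.{u} A) (n : ℕ) :
    pdLE M n ↔ HasProjectiveDimensionLT M (n + 1) := by
  rw [hasProjectiveDimensionLT_iff.{u}]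
  constructor
  · intro h i hi N e
    obtain ⟨j, rfl⟩ : ∃ j, i = j + 1 := ⟨i - 1, by omega⟩
    have := (subsingleton_ext_succ_iff M N j).1 (h _ (by omega) N)
    exact Subsingleton.elim _ _
  · intro h i hi N
    obtain ⟨j, rfl⟩ : ∃ j, i = j + 1 := ⟨i - 1, by omega⟩
    exact (subsingleton_ext_succ_iff M N j).2 (subsingleton_of_forall_eq 0 fun e => h _ (by omega) e)

/-- The module `M` has projective dimension `< n`. -/
abbrev PdLT (A : Type u) [Ring A] (M : Type u) [AddCommGroup M] [Module A M] (n : ℕ) : Prop :=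
  HasProjectiveDimensionLT (ModuleCat.of A M) n

/-- The condition `Ext¹(Z, Y) = 0` on modules. -/
abbrev ExtOneVanish (A : Type u) [Ring A] (Z Y : Type u) [AddCommGroup Z] [Module A Z]
    [AddCommGroup Y] [Module A Y] : Prop :=
  Subsingleton (Abelian.Ext.{u} (ModuleCat.of A Z) (ModuleCat.of A Y) 1)

/-- `M` is finitely generated of finite projective dimension. -/
def FinPd (A : Type u) [Ring A] (M : Type u) [AddCommGroup M] [Module A M] : Prop :=
  Module.Finite A M ∧ ∃ n, PdLT A M n

/-- `Ext¹(Z, Y) = 0` for every finitely generated `Z` of finite projective dimension. -/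
def PerpFinPd (A : Type u) [Ring A] (Y : Type u) [AddCommGroup Y] [Module A Y] : Prop :=
  ∀ (Z : Type u) [AddCommGroup Z] [Module A Z], FinPd A Z → ExtOneVanish A Z Y

section Unbundled

variable {M₁ M₂ M₃ Z M N : Type u} [AddCommGroup M₁] [Module A M₁] [AddCommGroup M₂] [Module A M₂]
  [AddCommGroup M₃] [Module A M₃] [AddCommGroup Z] [Module A Z]
  [AddCommGroup M] [Module A M] [AddCommGroup N] [Module A N]
  {f : M₁ →ₗ[A] M₂} {g : M₂ →ₗ[A] M₃}

theorem shortExact_of_function_exact (hf : Function.Injective f) (hfg : Function.Exact f g)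
    (hg : Function.Surjective g) :
    (ModuleCat.shortComplexOfCompEqZero f g hfg.linearMap_comp_eq_zero).ShortExact :=
  ModuleCat.shortComplex_shortExact _ hfg hf hg

theorem PdLT.mono {n m : ℕ} (h : PdLT A M n) (hnm : n ≤ m) : PdLT A M m :=
  hasProjectiveDimensionLT_of_ge _ n m hnm

theorem pdLT_one_of_projective [Module.Projective A M] : PdLT A M 1 := by
  have : Projective (ModuleCat.of A M) := (IsProjective.iff_projective M).1 inferInstance
  infer_instance

theorem projective_of_pdLT_one (h : PdLT A M 1) : Module.Projective A M :=
  (IsProjective.iff_projective M).2 (projective_iff_hasProjectiveDimensionLT_one.2 h)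

theorem pdLT_of_subsingleton [Subsingleton M] (n : ℕ) : PdLT A M n :=
  PdLT.mono ((ModuleCat.isZero_of_subsingleton (ModuleCat.of A M)).hasProjectiveDimensionLT_zero)
    n.zero_le

theorem PdLT.of_retract {n : ℕ} (h : PdLT A N n) (s : M →ₗ[A] N) (r : N →ₗ[A] M)
    (hrs : r ∘ₗ s = LinearMap.id) : PdLT A M n :=
  have : HasProjectiveDimensionLT (ModuleCat.of A N) n := h
  Retract.hasProjectiveDimensionLT (X := ModuleCat.of A M) (Y := ModuleCat.of A N)
    { i := ModuleCat.ofHom s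
      r := ModuleCat.ofHom r
      retract := by rw [← ModuleCat.ofHom_comp, hrs]; rfl } n

theorem PdLT.middle {n : ℕ} (hf : Function.Injective f) (hfg : Function.Exact f g)
    (hg : Function.Surjective g) (h₁ : PdLT A M₁ n) (h₃ : PdLT A M₃ n) : PdLT A M₂ n :=
  (shortExact_of_function_exact hf hfg hg).hasProjectiveDimensionLT_X₂ n h₁ h₃

theorem PdLT.left {n : ℕ} (hf : Function.Injective f) (hfg : Function.Exact f g)
    (hg : Function.Surjective g) (h₂ : PdLT A M₂ n) (h₃ : PdLT A M₃ (n + 1)) : PdLT A M₁ n :=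
  (shortExact_of_function_exact hf hfg hg).hasProjectiveDimensionLT_X₁ n h₂ h₃

theorem PdLT.right {n : ℕ} (hf : Function.Injective f) (hfg : Function.Exact f g)
    (hg : Function.Surjective g) (h₁ : PdLT A M₁ n) (h₂ : PdLT A M₂ (n + 1)) :
    PdLT A M₃ (n + 1) :=
  (shortExact_of_function_exact hf hfg hg).hasProjectiveDimensionLT_X₃ n h₁ h₂

theorem PdLT.prod {n : ℕ} (h₁ : PdLT A M n) (h₂ : PdLT A N n) : PdLT A (M × N) n :=
  PdLT.middle (f := LinearMap.inl A M N) (g := LinearMap.snd A M N) LinearMap.inl_injective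
    Function.Exact.inl_snd LinearMap.snd_surjective h₁ h₂

theorem PdLT.syzygy {n : ℕ} [Module.Projective A M₂] (hf : Function.Injective f)
    (hfg : Function.Exact f g) (hg : Function.Surjective g) (h₃ : PdLT A M₃ (n + 1 + 1)) :
    PdLT A M₁ (n + 1) :=
  PdLT.left hf hfg hg (pdLT_one_of_projective.mono (by omega)) h₃

theorem ExtOneVanish.exists_lift (hf : Function.Injective f) (hfg : Function.Exact f g)
    (hg : Function.Surjective g) (hZ : ExtOneVanish A Z M₁) (φ : Z →ₗ[A] M₃) :
    ∃ ψ : Z →ₗ[A] M₂, g ∘ₗ ψ = φ := by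
  have hS := shortExact_of_function_exact hf hfg hg
  obtain ⟨x, hx⟩ := Ext.covariant_sequence_exact₃ (ModuleCat.of A Z) hS
    (Ext.mk₀ (ModuleCat.ofHom φ)) (n₁ := 1) rfl (hZ.elim _ _)
  refine ⟨(Ext.homEquiv₀ x).hom, ?_⟩
  rw [← Ext.mk₀_homEquiv₀_apply x, Ext.mk₀_comp_mk₀] at hx
  exact congrArg ModuleCat.Hom.hom ((Ext.mk₀_bijective _ _).1 hx)

theorem ExtOneVanish.of_extend [Module.Projective A M₂] (hf : Function.Injective f)
    (hfg : Function.Exact f g) (hg : Function.Surjective g)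
    (h : ∀ φ : M₁ →ₗ[A] N, ∃ ψ : M₂ →ₗ[A] N, ψ ∘ₗ f = φ) : ExtOneVanish A M₃ N := by
  have hS := shortExact_of_function_exact hf hfg hg
  have : Projective (ModuleCat.of A M₂) := (IsProjective.iff_projective M₂).1 inferInstance
  refine subsingleton_of_forall_eq 0 fun e => ?_
  obtain ⟨x, rfl⟩ := Ext.contravariant_sequence_exact₃ hS (ModuleCat.of A N) e
    (Ext.eq_zero_of_projective _) (n₀ := 0) rfl
  obtain ⟨ψ, hψ⟩ := h (Ext.homEquiv₀ x).hom
  have hx : x = (Ext.mk₀ (ModuleCat.ofHom f)).comp (Ext.mk₀ (ModuleCat.ofHom ψ)) (zero_add 0) := by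
    rw [Ext.mk₀_comp_mk₀, ← ModuleCat.ofHom_comp, hψ]
    exact (Ext.mk₀_homEquiv₀_apply x).symm
  rw [hx]
  exact hS.extClass_comp_assoc _

theorem ExtOneVanish.middle (hf : Function.Injective f) (hfg : Function.Exact f g)
    (hg : Function.Surjective g) (h₁ : ExtOneVanish A Z M₁) (h₃ : ExtOneVanish A Z M₃) :
    ExtOneVanish A Z M₂ := by
  have hS := shortExact_of_function_exact hf hfg hg
  refine subsingleton_of_forall_eq 0 fun e => ?_
  obtain ⟨x, rfl⟩ := Ext.covariant_sequence_exact₂ (ModuleCat.of A Z) hS e (h₃.elim _ _)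
  have : x = 0 := h₁.elim _ _
  rw [this, Ext.zero_comp]

theorem ExtOneVanish.of_retract (h : ExtOneVanish A Z N) (s : M →ₗ[A] N) (r : N →ₗ[A] M)
    (hrs : r ∘ₗ s = LinearMap.id) : ExtOneVanish A Z M := by
  refine subsingleton_of_forall_eq 0 fun e => ?_
  have h₀ : e.comp (Ext.mk₀ (ModuleCat.ofHom s)) (add_zero 1) = 0 := h.elim _ _
  have h₁ := congrArg (fun x => Ext.comp x (Ext.mk₀ (ModuleCat.ofHom r)) (add_zero 1)) h₀
  rw [Ext.comp_assoc_of_third_deg_zero, Ext.mk₀_comp_mk₀, ← ModuleCat.ofHom_comp, hrs,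
    Ext.zero_comp] at h₁
  rw [← h₁]
  exact (Ext.comp_mk₀_id e).symm

theorem ExtOneVanish.of_injective [Module.Injective A N] : ExtOneVanish A Z N := by
  have : Injective (ModuleCat.of A N) := (Module.injective_iff_injective_object A N).1 inferInstance
  exact subsingleton_of_forall_eq 0 fun e => Ext.eq_zero_of_injective e

theorem PerpFinPd.middle (hf : Function.Injective f) (hfg : Function.Exact f g)
    (hg : Function.Surjective g) (h₁ : PerpFinPd A M₁) (h₃ : PerpFinPd A M₃) :
    PerpFinPd A M₂ :=
  fun Z _ _ hZ => ExtOneVanish.middle hf hfg hg (h₁ Z hZ) (h₃ Z hZ)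

theorem PerpFinPd.of_retract (h : PerpFinPd A N) (s : M →ₗ[A] N) (r : N →ₗ[A] M)
    (hrs : r ∘ₗ s = LinearMap.id) : PerpFinPd A M :=
  fun Z _ _ hZ => (h Z hZ).of_retract s r hrs

theorem FinPd.of_retract (h : FinPd A N) (s : M →ₗ[A] N) (r : N →ₗ[A] M)
    (hrs : r ∘ₗ s = LinearMap.id) : FinPd A M := by
  obtain ⟨hN, n, hn⟩ := h
  exact ⟨Module.Finite.of_surjective r fun x => ⟨s x, LinearMap.congr_fun hrs x⟩,
    n, hn.of_retract s r hrs⟩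

end Unbundled

theorem inP_iff_finPd (M : ModuleCat.{u} A) : InP M ↔ FinPd A M := by
  refine and_congr_right fun _ => ⟨fun ⟨n, hn⟩ => ⟨_, (pdLE_iff_hasProjectiveDimensionLT M n).1 hn⟩,
    fun ⟨n, hn⟩ => ⟨n, (pdLE_iff_hasProjectiveDimensionLT M n).2 (PdLT.mono hn n.le_succ)⟩⟩

theorem extInjInP_of_finPd_of_perpFinPd {M : ModuleCat.{u} A} (h : FinPd A M)
    (h' : PerpFinPd A M) : ExtInjInP M :=
  ⟨(inP_iff_finPd M).2 h, fun N hN =>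
    (subsingleton_ext_succ_iff N M 0).2 (h' N ((inP_iff_finPd N).1 hN))⟩

theorem pdLT_dfinsupp {ι : Type u} (n : ℕ) : ∀ (F : ι → Type u) [∀ i, AddCommGroup (F i)]
    [∀ i, Module A (F i)], (∀ i, PdLT A (F i) (n + 1)) → PdLT A (Π₀ i, F i) (n + 1) := by
  induction n with
  | zero =>
    intro F _ _ h
    have : ∀ i, Module.Projective A (F i) := fun i => projective_of_pdLT_one (h i)
    exact pdLT_one_of_projective
  | succ n ih =>
    intro F _ _ h
    let p : ∀ i, (F i →₀ A) →ₗ[A] F i := fun i => Finsupp.linearCombination A id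
    have hp : ∀ i, Function.Surjective (p i) := fun i => Finsupp.linearCombination_id_surjective A _
    have hK := ih (fun i => LinearMap.ker (p i)) fun i =>
      PdLT.syzygy (f := (LinearMap.ker (p i)).subtype) (g := p i)
        (Submodule.subtype_injective _) (LinearMap.exact_subtype_ker_map (p i)) (hp i) (h i)
    refine PdLT.right (M₂ := Π₀ i, F i →₀ A)
      (f := DFinsupp.mapRange.linearMap fun i => (LinearMap.ker (p i)).subtype)
      (g := DFinsupp.mapRange.linearMap p) ?_ ?_ ?_ hK (pdLT_one_of_projective.mono (by omega))
    · exact (DFinsupp.mapRange_injective _ fun i => map_zero _).2 fun i => Submodule.subtype_injective _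
    · intro x
      constructor
      · intro hx
        have hx' : ∀ i, x i ∈ LinearMap.ker (p i) := fun i => DFunLike.congr_fun hx i
        classical
        refine ⟨DFinsupp.mk (DFinsupp.support x) fun i => ⟨x i, hx' i⟩, ?_⟩
        ext1 i
        by_cases hi : x i = 0
        · simp [hi]
        · simp [hi]
      · rintro ⟨y, rfl⟩
        ext1 i
        simp
    · exact (DFinsupp.mapRange_surjective _ fun i => map_zero _).2 hp

/-- `f` is a right approximation of `C` by finitely generated modules of finite projective
dimension. -/
def RightApprox {X C : Type u} [AddCommGroup X] [Module A X] [AddCommGroup C] [Module A C]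
    (f : X →ₗ[A] C) : Prop :=
  FinPd A X ∧ ∀ (Z : Type u) [AddCommGroup Z] [Module A Z], FinPd A Z →
    ∀ g : Z →ₗ[A] C, ∃ h : Z →ₗ[A] X, f ∘ₗ h = g

/-- `C` is the image of a finitely generated module of projective dimension `< n`, with kernel
in the right perpendicular class of the modules of finite projective dimension. -/
def HasSpecialApprox (A : Type u) [Ring A] (C : Type u) [AddCommGroup C] [Module A C]
    (n : ℕ) : Prop :=
  ∃ (X : ModuleCat.{u} A) (f : X →ₗ[A] C), Function.Surjective f ∧ Module.Finite A X ∧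
    PdLT A X n ∧ PerpFinPd A (LinearMap.ker f)

/-- The pushout of `κ : K → X` along the inclusion of the kernel `K` of `p : Q → Z`. -/
theorem pdLT_pushout {X Q Z : Type u} [AddCommGroup X] [Module A X] [AddCommGroup Q] [Module A Q]
    [Module.Projective A Q] [AddCommGroup Z] [Module A Z] {p : Q →ₗ[A] Z}
    (hp : Function.Surjective p) (κ : LinearMap.ker p →ₗ[A] X) {n : ℕ} (hX : PdLT A X (n + 1 + 1))
    (hZ : PdLT A Z (n + 1 + 1)) :
    PdLT A ((X × Q) ⧸ LinearMap.range (κ.prod (-(LinearMap.ker p).subtype))) (n + 1 + 1) := by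
  refine PdLT.right (f := κ.prod (-(LinearMap.ker p).subtype)) (g := Submodule.mkQ _) ?_
    (LinearMap.exact_map_mkQ_range _) (Submodule.mkQ_surjective _)
    (PdLT.syzygy (f := (LinearMap.ker p).subtype) (g := p) (Submodule.subtype_injective _)
      (LinearMap.exact_subtype_ker_map p) hp hZ)
    (hX.prod (pdLT_one_of_projective.mono (by omega)))
  intro x y hxy
  have := congrArg Prod.snd hxy
  simpa using this

theorem RightApprox.surjective {X C : Type u} [AddCommGroup X] [Module A X] [AddCommGroup C]
    [Module A C] [Module.Finite A C] {f : X →ₗ[A] C} (hf : RightApprox f) :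
    Function.Surjective f := by
  obtain ⟨n, p, hp⟩ := Module.Finite.exists_fin' A C
  obtain ⟨h, rfl⟩ := hf.2 (Fin n → A) ⟨inferInstance, 1, pdLT_one_of_projective⟩ p
  exact Function.Surjective.of_comp hp

theorem exists_minimal_rightApprox [IsArtinianRing A] {C : Type u} [AddCommGroup C] [Module A C]
    (h : ∃ (X : ModuleCat.{u} A) (f : X →ₗ[A] C), RightApprox f) :
    ∃ (X : ModuleCat.{u} A) (f : X →ₗ[A] C), RightApprox f ∧
      ∀ g : X →ₗ[A] X, f ∘ₗ g = f → Function.Bijective g := by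
  let s : Set (ModuleCat.{u} A) := {X | ∃ f : X →ₗ[A] C, RightApprox f}
  obtain ⟨X, ⟨f, hf⟩, hmin⟩ := (InvImage.wf (fun X : ModuleCat.{u} A => Module.length A X)
    (wellFounded_lt (α := ℕ∞))).has_min s h
  refine ⟨X, f, hf, fun g hg => ?_⟩
  have : Module.Finite A X := hf.1.1
  suffices hinj : Function.Injective g from
    ⟨hinj, IsArtinian.surjective_of_injective_endomorphism g hinj⟩
  obtain ⟨N, hN, hN1⟩ := ((LinearMap.eventually_isCompl_ker_pow_range_pow
    (g : Module.End A X)).and (Filter.eventually_ge_atTop 1)).exists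
  have hfg : ∀ k : ℕ, f ∘ₗ ((g : Module.End A X) ^ k) = f := by
    intro k
    induction k with
    | zero => rfl
    | succ k ih => rw [pow_succ', Module.End.mul_eq_comp, ← LinearMap.comp_assoc, hg, ih]
  have hT : RightApprox (f ∘ₗ (LinearMap.range ((g : Module.End A X) ^ N)).subtype) := by
    refine ⟨hf.1.of_retract (Submodule.subtype _) (Submodule.projectionOnto _ _ hN.symm) ?_,
      fun Z _ _ hZ φ => ?_⟩
    · exact Submodule.projectionOnto_comp_subtype hN.symm
    · obtain ⟨h, rfl⟩ := hf.2 Z hZ φ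
      refine ⟨LinearMap.rangeRestrict ((g : Module.End A X) ^ N) ∘ₗ h, ?_⟩
      ext z
      exact LinearMap.congr_fun (hfg N) (h z)
  have htop : LinearMap.range ((g : Module.End A X) ^ N) = ⊤ := by
    by_contra hne
    exact hmin (ModuleCat.of A (LinearMap.range ((g : Module.End A X) ^ N))) ⟨_, hT⟩
      (Submodule.length_lt hne)
  have hker : LinearMap.ker ((g : Module.End A X) ^ N) = ⊥ := by
    have := hN.inf_eq_bot
    rwa [htop, inf_top_eq] at this
  rw [← LinearMap.ker_eq_bot, eq_bot_iff, ← hker]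
  intro x hx
  obtain ⟨k, rfl⟩ : ∃ k, N = k + 1 := ⟨N - 1, by omega⟩
  rw [LinearMap.mem_ker] at hx ⊢
  rw [pow_succ, Module.End.mul_apply, hx, map_zero]

/-- The Wakamatsu lemma. -/
theorem RightApprox.perpFinPd_ker {X C : Type u} [AddCommGroup X] [Module A X] [AddCommGroup C]
    [Module A C] {f : X →ₗ[A] C} (hf : RightApprox f)
    (hmin : ∀ g : X →ₗ[A] X, f ∘ₗ g = f → Function.Bijective g) :
    PerpFinPd A (LinearMap.ker f) := by
  intro Z _ _ hZ
  have := hZ.1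
  obtain ⟨m, p, hp⟩ := Module.Finite.exists_fin' A Z
  refine ExtOneVanish.of_extend (Submodule.subtype_injective (LinearMap.ker p))
    (LinearMap.exact_subtype_ker_map p) hp fun φ => ?_
  let κ : LinearMap.ker p →ₗ[A] X := (LinearMap.ker f).subtype ∘ₗ φ
  let L := LinearMap.range (κ.prod (-(LinearMap.ker p).subtype))
  have hU : FinPd A ((X × (Fin m → A)) ⧸ L) := by
    obtain ⟨hX, a, ha⟩ := hf.1
    obtain ⟨-, b, hb⟩ := hZ
    exact ⟨inferInstance, _, pdLT_pushout hp κ (n := a + b) (ha.mono (by omega))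
      (hb.mono (by omega))⟩
  have hL : L ≤ LinearMap.ker (f ∘ₗ LinearMap.fst A X (Fin m → A)) := by
    rintro _ ⟨k, rfl⟩
    simp [κ]
  obtain ⟨h, hh⟩ := hf.2 _ hU (L.liftQ (f ∘ₗ LinearMap.fst A X (Fin m → A)) hL)
  have hh' : ∀ x, f (h (L.mkQ x)) = f x.1 := fun x => LinearMap.congr_fun hh (L.mkQ x)
  let a : X →ₗ[A] X := h ∘ₗ L.mkQ ∘ₗ LinearMap.inl A X (Fin m → A)
  have ha : f ∘ₗ a = f := by
    ext x
    exact hh' (x, 0)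
  let e := LinearEquiv.ofBijective a (hmin a ha)
  have he : ∀ x, f (e.symm x) = f x := by
    intro x
    obtain ⟨y, rfl⟩ := e.surjective x
    rw [e.symm_apply_apply]
    exact (LinearMap.congr_fun ha y).symm
  refine ⟨LinearMap.codRestrict (LinearMap.ker f)
    (e.symm.toLinearMap ∘ₗ h ∘ₗ L.mkQ ∘ₗ LinearMap.inr A X (Fin m → A)) fun q => ?_, ?_⟩
  · rw [LinearMap.mem_ker]
    exact (he _).trans ((hh' (0, q)).trans (map_zero f))
  · ext k
    refine congrArg Subtype.val (a₂ := φ k) (Subtype.ext ?_)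
    change e.symm (h (L.mkQ (0, k))) = φ k
    rw [LinearEquiv.symm_apply_eq]
    change _ = h (L.mkQ (φ k, 0))
    congr 1
    rw [← sub_eq_zero, ← map_sub, Submodule.mkQ_apply, Submodule.Quotient.mk_eq_zero]
    exact ⟨-k, by simp [κ]⟩

theorem hasSpecialApprox_of_rightApprox [IsArtinianRing A] {C : Type u} [AddCommGroup C] [Module A C]
    [Module.Finite A C] (h : ∃ (X : ModuleCat.{u} A) (f : X →ₗ[A] C), RightApprox f) :
    ∃ n, HasSpecialApprox A C n := by
  obtain ⟨X, f, hf, hmin⟩ := exists_minimal_rightApprox h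
  obtain ⟨hX, n, hn⟩ := id hf.1
  exact ⟨n, X, f, hf.surjective, hX, hn, hf.perpFinPd_ker hmin⟩

theorem HasSpecialApprox.mono {C : Type u} [AddCommGroup C] [Module A C] {n m : ℕ}
    (h : HasSpecialApprox A C n) (hnm : n ≤ m) : HasSpecialApprox A C m := by
  obtain ⟨X, f, hf, hX, hn, hker⟩ := h
  exact ⟨X, f, hf, hX, PdLT.mono hn hnm, hker⟩

theorem HasSpecialApprox.of_linearEquiv {C D : Type u} [AddCommGroup C] [Module A C]
    [AddCommGroup D] [Module A D] {n : ℕ} (h : HasSpecialApprox A C n) (e : C ≃ₗ[A] D) :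
    HasSpecialApprox A D n := by
  obtain ⟨X, f, hf, hX, hn, hker⟩ := h
  refine ⟨X, e.toLinearMap ∘ₗ f, e.surjective.comp hf, hX, hn, ?_⟩
  rwa [LinearEquiv.ker_comp]

theorem hasSpecialApprox_of_subsingleton {C : Type u} [AddCommGroup C] [Module A C]
    [Subsingleton C] (n : ℕ) : HasSpecialApprox A C n := by
  refine ⟨ModuleCat.of A C, LinearMap.id, Function.surjective_id, ?_, pdLT_of_subsingleton n, ?_⟩
  · change Module.Finite A C
    infer_instance
  · intro Z _ _ _
    have : Subsingleton (LinearMap.ker (LinearMap.id : C →ₗ[A] C)) := inferInstance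
    refine subsingleton_of_forall_eq 0 fun e => ?_
    rw [← Ext.comp_mk₀_id e, (ModuleCat.isZero_of_subsingleton
      (ModuleCat.of A (LinearMap.ker (LinearMap.id : C →ₗ[A] C)))).eq_of_src (𝟙 _) 0,
      Ext.mk₀_zero, Ext.comp_zero]

theorem HasSpecialApprox.exists_bound_simple
    (h : ∀ (S : Type u) [AddCommGroup S] [Module A S], IsSimpleModule A S →
      ∃ n, HasSpecialApprox A S n)
    {N : Type u} [AddCommGroup N] [Module A N] (hN : IsFiniteLength A N) :
    ∃ d, ∀ (S : Type u) [AddCommGroup S] [Module A S], IsSimpleModule A S →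
      ∀ f : N →ₗ[A] S, f ≠ 0 → HasSpecialApprox A S d := by
  induction hN with
  | of_subsingleton =>
    exact ⟨0, fun S _ _ _ f hf => (hf (Subsingleton.elim _ _)).elim⟩
  | @of_simple_quotient M _ _ N hMN hN ih =>
    obtain ⟨d, hd⟩ := ih
    obtain ⟨n, hn⟩ := h (M ⧸ N) hMN
    refine ⟨max d n, fun S _ _ hS f hf => ?_⟩
    by_cases hfN : f ∘ₗ N.subtype = 0
    · have hle : N ≤ LinearMap.ker f := fun x hx => LinearMap.congr_fun hfN ⟨x, hx⟩
      have hne : N.liftQ f hle ≠ 0 := by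
        intro h0
        apply hf
        rw [← Submodule.liftQ_mkQ N f hle, h0, LinearMap.zero_comp]
      exact (hn.mono (le_max_right _ _)).of_linearEquiv
        (LinearEquiv.ofBijective _ (LinearMap.bijective_of_ne_zero hne))
    · exact (hd S hS _ hfN).mono (le_max_left _ _)

theorem HasSpecialApprox.of_extension [IsNoetherianRing A] {C : Type u} [AddCommGroup C]
    [Module A C] {N : Submodule A C} {n : ℕ} (h₁ : HasSpecialApprox A N (n + 1 + 1))
    (h₂ : HasSpecialApprox A (C ⧸ N) (n + 1 + 1)) : HasSpecialApprox A C (n + 1 + 1) := by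
  obtain ⟨X, f, hf, hX, hXn, hfker⟩ := h₁
  obtain ⟨Z, g, hg, hZ, hZn, hgker⟩ := h₂
  obtain ⟨m, p, hp⟩ := Module.Finite.exists_fin' A Z
  obtain ⟨q, hq⟩ := Module.projective_lifting_property N.mkQ (g ∘ₗ p) N.mkQ_surjective
  have hq' : ∀ y, N.mkQ (q y) = g (p y) := LinearMap.congr_fun hq
  have hqN : ∀ y, g (p y) = 0 → q y ∈ N := fun y hy => by
    rw [← Submodule.Quotient.mk_eq_zero, ← Submodule.mkQ_apply, hq', hy]
  have hK : FinPd A (LinearMap.ker p) :=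
    ⟨inferInstance, _, PdLT.syzygy (Submodule.subtype_injective (LinearMap.ker p))
      (LinearMap.exact_subtype_ker_map p) hp hZn⟩
  obtain ⟨κ, hκ⟩ := ExtOneVanish.exists_lift (Submodule.subtype_injective (LinearMap.ker f))
    (LinearMap.exact_subtype_ker_map f) hf (hfker _ hK)
    ((q ∘ₗ (LinearMap.ker p).subtype).codRestrict N fun k => hqN _ (by
      change g (p k) = 0
      rw [LinearMap.mem_ker.1 k.2, map_zero]))
  have hκ' : ∀ k, (f (κ k) : C) = q k := fun k => congrArg Subtype.val (LinearMap.congr_fun hκ k)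
  let L := LinearMap.range (κ.prod (-(LinearMap.ker p).subtype))
  let F : ((X × (Fin m → A)) ⧸ L) →ₗ[A] C := L.liftQ ((N.subtype ∘ₗ f).coprod q) (by
    rintro _ ⟨k, rfl⟩
    simp [hκ'])
  have hF : ∀ x y, F (L.mkQ (x, y)) = f x + q y := fun x y => rfl
  let π : ((X × (Fin m → A)) ⧸ L) →ₗ[A] Z := L.liftQ (p ∘ₗ LinearMap.snd A X (Fin m → A)) (by
    rintro _ ⟨k, rfl⟩
    simp)
  have hπ : ∀ x y, π (L.mkQ (x, y)) = p y := fun x y => rfl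
  have hgπ : ∀ z, g (π z) = N.mkQ (F z) := by
    intro z
    obtain ⟨⟨x, y⟩, rfl⟩ := L.mkQ_surjective z
    rw [hF, hπ, ← hq', map_add, Submodule.mkQ_apply N (f x),
      (Submodule.Quotient.mk_eq_zero N).2 (f x).2, zero_add]
  let a : LinearMap.ker f →ₗ[A] LinearMap.ker F :=
    (L.mkQ ∘ₗ LinearMap.inl A X (Fin m → A) ∘ₗ (LinearMap.ker f).subtype).codRestrict _ fun x => by
      change F (L.mkQ (x, 0)) = 0
      rw [hF, LinearMap.mem_ker.1 x.2, map_zero, Submodule.coe_zero, add_zero]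
  let b : LinearMap.ker F →ₗ[A] LinearMap.ker g :=
    (π ∘ₗ (LinearMap.ker F).subtype).codRestrict _ fun z => by
      change g (π z) = 0
      rw [hgπ, LinearMap.mem_ker.1 z.2, map_zero]
  refine ⟨ModuleCat.of A ((X × (Fin m → A)) ⧸ L), F, fun c => ?_,
    (inferInstance : Module.Finite A ((X × (Fin m → A)) ⧸ L)), pdLT_pushout hp κ hXn hZn,
    PerpFinPd.middle (f := a) (g := b) ?_ ?_ ?_ hfker hgker⟩
  · obtain ⟨z, hz⟩ := hg (N.mkQ c)
    obtain ⟨y, rfl⟩ := hp z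
    have hc : c - q y ∈ N := by
      rw [← Submodule.Quotient.mk_eq_zero, ← Submodule.mkQ_apply, map_sub, hq', hz, sub_self]
    obtain ⟨x, hx⟩ := hf ⟨_, hc⟩
    exact ⟨L.mkQ (x, y), by rw [hF, hx, sub_add_cancel]⟩
  · rw [← LinearMap.ker_eq_bot, LinearMap.ker_eq_bot']
    intro x hx
    have h0 : L.mkQ (x, 0) = 0 := congrArg Subtype.val hx
    rw [Submodule.mkQ_apply, Submodule.Quotient.mk_eq_zero] at h0
    obtain ⟨k, hk⟩ := h0
    have hk2 : k = 0 := by simpa using congrArg Prod.snd hk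
    have hk1 : κ k = x := congrArg Prod.fst hk
    rw [hk2, map_zero] at hk1
    exact Subtype.ext hk1.symm
  · rintro ⟨z, hz⟩
    obtain ⟨⟨x, y⟩, rfl⟩ := L.mkQ_surjective z
    constructor
    · intro h
      have hy : p y = 0 := congrArg Subtype.val h
      have hx : f (x + κ ⟨y, hy⟩) = 0 := by
        apply Subtype.ext
        rw [map_add, Submodule.coe_add, hκ']
        exact hz
      refine ⟨⟨_, hx⟩, Subtype.ext ?_⟩
      change L.mkQ (x + κ ⟨y, hy⟩, 0) = L.mkQ (x, y)
      rw [← sub_eq_zero, ← map_sub, Submodule.mkQ_apply, Submodule.Quotient.mk_eq_zero]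
      exact ⟨⟨y, hy⟩, by simp⟩
    · rintro ⟨w, hw⟩
      rw [← hw]
      exact Subtype.ext (map_zero p)
  · rintro ⟨z, hz⟩
    obtain ⟨y, rfl⟩ := hp z
    obtain ⟨x, hx⟩ := hf (-⟨q y, hqN y hz⟩)
    refine ⟨⟨L.mkQ (x, y), ?_⟩, rfl⟩
    rw [LinearMap.mem_ker, hF, hx]
    simp

theorem HasSpecialApprox.of_isFiniteLength [IsNoetherianRing A] {n : ℕ}
    (h : ∀ (S : Type u) [AddCommGroup S] [Module A S], IsSimpleModule A S →
      HasSpecialApprox A S (n + 1 + 1))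
    {C : Type u} [AddCommGroup C] [Module A C] (hC : IsFiniteLength A C) :
    HasSpecialApprox A C (n + 1 + 1) := by
  induction hC with
  | of_subsingleton => exact hasSpecialApprox_of_subsingleton _
  | @of_simple_quotient _ _ _ _ hMN _ ih => exact ih.of_extension (h _ hMN)

theorem HasSpecialApprox.pdLT {M : Type u} [AddCommGroup M] [Module A M] {n : ℕ}
    (h : HasSpecialApprox A M n) (hM : FinPd A M) : PdLT A M n := by
  obtain ⟨X, f, hf, -, hn, hker⟩ := h
  obtain ⟨s, hs⟩ := ExtOneVanish.exists_lift (Submodule.subtype_injective (LinearMap.ker f))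
    (LinearMap.exact_subtype_ker_map f) hf (hker M hM) LinearMap.id
  exact hn.of_retract s f hs

/-- The special approximations of all finitely generated modules can be chosen of uniformly
bounded projective dimension. -/
theorem exists_forall_hasSpecialApprox [IsArtinianRing A]
    (h : ∀ (S : Type u) [AddCommGroup S] [Module A S], IsSimpleModule A S →
      ∃ n, HasSpecialApprox A S n) :
    ∃ n, ∀ (C : Type u) [AddCommGroup C] [Module A C] [Module.Finite A C],
      HasSpecialApprox A C n := by
  have hlen : ∀ (C : Type u) [AddCommGroup C] [Module A C] [Module.Finite A C],
      IsFiniteLength A C := fun C _ _ _ =>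
    isFiniteLength_iff_isNoetherian_isArtinian.2 ⟨inferInstance, inferInstance⟩
  obtain ⟨d, hd⟩ := HasSpecialApprox.exists_bound_simple h (hlen A)
  refine ⟨d + 1 + 1, fun C _ _ _ => HasSpecialApprox.of_isFiniteLength (fun S _ _ hS => ?_)
    (hlen C)⟩
  have : Nontrivial S := hS.nontrivial
  obtain ⟨x, hx⟩ := exists_ne (0 : S)
  refine (hd S hS (LinearMap.toSpanSingleton A S x) fun h0 => hx ?_).mono (by omega)
  simpa using LinearMap.congr_fun h0 1

/-- `i` is an essential embedding. -/
def IsEssentialEmbedding {M I : Type u} [AddCommGroup M] [Module A M] [AddCommGroup I]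
    [Module A I] (i : M →ₗ[A] I) : Prop :=
  Function.Injective i ∧ ∀ N : Submodule A I, Disjoint N (LinearMap.range i) → N = ⊥

theorem IsEssentialEmbedding.comp {M I J : Type u} [AddCommGroup M] [Module A M] [AddCommGroup I]
    [Module A I] [AddCommGroup J] [Module A J] {j : I →ₗ[A] J} {i : M →ₗ[A] I}
    (hj : IsEssentialEmbedding j) (hi : IsEssentialEmbedding i) :
    IsEssentialEmbedding (j ∘ₗ i) := by
  refine ⟨hj.1.comp hi.1, fun N hN => hj.2 N ?_⟩
  have hN' : N.comap j = ⊥ := by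
    refine hi.2 _ (Submodule.disjoint_def.2 ?_)
    rintro _ hx ⟨m, rfl⟩
    exact hj.1 ((Submodule.disjoint_def.1 hN _ hx ⟨m, rfl⟩).trans (map_zero j).symm)
  refine Submodule.disjoint_def.2 ?_
  rintro _ hx ⟨y, rfl⟩
  rw [(Submodule.mem_bot A).1 (hN' ▸ hx : y ∈ (⊥ : Submodule A I)), map_zero]

/-- An embedding becomes essential modulo a maximal submodule disjoint from its range. -/
theorem exists_isEssentialEmbedding_mkQ_comp {I X : Type u} [AddCommGroup I] [Module A I]
    [AddCommGroup X] [Module A X] [IsNoetherian A X] {j : I →ₗ[A] X}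
    (hj : Function.Injective j) : ∃ N : Submodule A X, IsEssentialEmbedding (N.mkQ ∘ₗ j) := by
  obtain ⟨N, hN, hmax⟩ := set_has_maximal_iff_noetherian.2 ‹IsNoetherian A X›
    {N : Submodule A X | Disjoint N (LinearMap.range j)} ⟨⊥, disjoint_bot_left⟩
  have hNj := Submodule.disjoint_def.1 hN
  have hinj : Function.Injective (N.mkQ ∘ₗ j) := by
    rw [← LinearMap.ker_eq_bot, LinearMap.ker_eq_bot']
    intro x hx
    exact hj ((hNj _ ((Submodule.Quotient.mk_eq_zero N).1 hx) ⟨x, rfl⟩).trans (map_zero j).symm)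
  refine ⟨N, hinj, fun L hL => ?_⟩
  have hle : N ≤ L.comap N.mkQ := fun x hx => by
    rw [Submodule.mem_comap, Submodule.mkQ_apply, (Submodule.Quotient.mk_eq_zero N).2 hx]
    exact L.zero_mem
  have hdisj : Disjoint (L.comap N.mkQ) (LinearMap.range j) := by
    refine Submodule.disjoint_def.2 ?_
    rintro _ hx ⟨y, rfl⟩
    have h0 : (N.mkQ ∘ₗ j) y = 0 := Submodule.disjoint_def.1 hL _ hx ⟨y, rfl⟩
    rw [hinj (h0.trans (map_zero _).symm), map_zero]
  have heq : L.comap N.mkQ = N := by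
    by_contra hne
    exact hmax _ hdisj (lt_of_le_of_ne hle (Ne.symm hne))
  rw [eq_bot_iff]
  intro z hz
  obtain ⟨x, rfl⟩ := N.mkQ_surjective z
  have hx : x ∈ N := heq ▸ hz
  rw [Submodule.mem_bot, Submodule.mkQ_apply, Submodule.Quotient.mk_eq_zero]
  exact hx

section Algebra

variable {R : Type*} [CommRing R] [Algebra R A] {M : Type u} [AddCommGroup M] [Module A M]
  [Module R M] [IsScalarTower R A M] {I : Type u} [AddCommGroup I] [Module A I]
  [Module R I] [IsScalarTower R A I]

theorem length_linearMap_le {L : Type u} [AddCommGroup L] [Module A L] (N : Submodule A L) :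
    Module.length R (L →ₗ[A] I) ≤
      Module.length R (N →ₗ[A] I) + Module.length R ((L ⧸ N) →ₗ[A] I) := by
  have hexact : Function.Exact (LinearMap.lcomp R I N.mkQ)
      (LinearMap.lcomp R I N.subtype).rangeRestrict := by
    intro f
    constructor
    · intro hf
      have hf' : f ∘ₗ N.subtype = 0 := congrArg Subtype.val hf
      have hle : N ≤ LinearMap.ker f := fun x hx => LinearMap.congr_fun hf' ⟨x, hx⟩
      exact ⟨N.liftQ f hle, N.liftQ_mkQ f hle⟩
    · rintro ⟨g, rfl⟩
      refine Subtype.ext (LinearMap.ext fun x => ?_)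
      change g (N.mkQ x) = 0
      rw [Submodule.mkQ_apply, (Submodule.Quotient.mk_eq_zero N).2 x.2, map_zero]
  rw [Module.length_eq_add_of_exact _ _ (fun f g hfg => ?_) (LinearMap.surjective_rangeRestrict _)
    hexact, add_comm]
  · exact add_le_add_left (Module.length_le_of_injective (Submodule.subtype _)
      (Submodule.subtype_injective _)) _
  · exact (LinearMap.cancel_right N.mkQ_surjective).1 hfg

theorem IsEssentialEmbedding.length_linearMap_le_of_isSimpleModule {i : M →ₗ[A] I}
    (hi : IsEssentialEmbedding i) (S : Type u) [AddCommGroup S] [Module A S] [IsSimpleModule A S] :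
    Module.length R (S →ₗ[A] I) ≤ Module.length R M := by
  have := IsSimpleModule.nontrivial A S
  obtain ⟨x, hx⟩ := exists_ne (0 : S)
  have hmem : ∀ f : S →ₗ[A] I, f x ∈ LinearMap.range i := by
    intro f
    rcases eq_bot_or_eq_top ((LinearMap.range i).comap f) with h | h
    · have hf : LinearMap.range f = ⊥ := by
        refine hi.2 _ (Submodule.disjoint_def.2 ?_)
        rintro _ ⟨s, rfl⟩ hs
        rw [(Submodule.mem_bot A).1 (h ▸ hs : s ∈ (⊥ : Submodule A S)), map_zero]
      rw [LinearMap.range_eq_bot.1 hf]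
      exact Submodule.zero_mem _
    · exact (h ▸ Submodule.mem_top : x ∈ (LinearMap.range i).comap f)
  let ev : (S →ₗ[A] I) →ₗ[R] LinearMap.range (i.restrictScalars R) :=
    (LinearMap.applyₗ' R x).codRestrict _ hmem
  have hev : Function.Injective ev := by
    intro f g hfg
    have hfg' : f x = g x := congrArg Subtype.val hfg
    refine LinearMap.ext fun s => ?_
    obtain ⟨a, rfl⟩ := IsSimpleModule.toSpanSingleton_surjective A hx s
    simp [hfg']
  exact (Module.length_le_of_injective ev hev).trans
    (Module.length_le_of_surjective _ (LinearMap.surjective_rangeRestrict (i.restrictScalars R)))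

theorem IsEssentialEmbedding.length_linearMap_le {i : M →ₗ[A] I} (hi : IsEssentialEmbedding i)
    {L : Type u} [AddCommGroup L] [Module A L] (hL : IsFiniteLength A L) :
    Module.length R (L →ₗ[A] I) ≤ Module.length A L * Module.length R M := by
  induction hL with
  | of_subsingleton => simp
  | @of_simple_quotient L _ _ N hMN _ ih =>
    refine (ArtinTilting.length_linearMap_le N).trans ?_
    rw [Module.length_eq_add_of_exact N.subtype N.mkQ N.subtype_injective N.mkQ_surjective
      (LinearMap.exact_subtype_mkQ N), add_mul, Module.length_eq_one A (L ⧸ N), one_mul]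
    exact add_le_add ih (hi.length_linearMap_le_of_isSimpleModule _)

theorem IsEssentialEmbedding.length_le [IsArtinianRing A] {i : M →ₗ[A] I}
    (hi : IsEssentialEmbedding i) :
    Module.length A I ≤ Module.length A A * Module.length R M := by
  have h : Module.length A I ≤ Module.length R I := by
    rw [← WithBot.coe_le_coe, Module.coe_length, Module.coe_length]
    exact Order.krullDim_le_of_orderEmbedding (Submodule.restrictScalarsEmbedding R A I)
  rw [← (LinearMap.ringLmapEquivSelf A R I).length_eq] at h
  exact h.trans (hi.length_linearMap_le
    (isFiniteLength_iff_isNoetherian_isArtinian.2 ⟨inferInstance, inferInstance⟩))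

end Algebra

theorem finite_of_length_ne_top {M : Type u} [AddCommGroup M] [Module A M]
    (h : Module.length A M ≠ ⊤) : Module.Finite A M :=
  have := (isFiniteLength_iff_isNoetherian_isArtinian.1 (Module.length_ne_top_iff.1 h)).1
  inferInstance

/-- An essential extension of maximal length is injective. -/
theorem injective_of_forall_length_le [IsArtinianRing A] {I : Type u} [AddCommGroup I]
    [Module A I] [Module.Finite A I]
    (hmax : ∀ (J : Type u) [AddCommGroup J] [Module A J] [Module.Finite A J] (j : I →ₗ[A] J),
      IsEssentialEmbedding j → Module.length A J ≤ Module.length A I) : Module.Injective A I := by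
  refine Module.Baer.injective fun 𝔞 φ => ?_
  let L := LinearMap.range (φ.prod (-Submodule.subtype 𝔞))
  have hj : Function.Injective (L.mkQ ∘ₗ LinearMap.inl A I A) := by
    rw [← LinearMap.ker_eq_bot, LinearMap.ker_eq_bot']
    intro x hx
    obtain ⟨k, hk⟩ := (Submodule.Quotient.mk_eq_zero L).1 hx
    have hk2 : k = 0 := by simpa using congrArg Prod.snd hk
    have hk1 : φ k = x := congrArg Prod.fst hk
    rw [← hk1, hk2, map_zero]
  obtain ⟨N, hN⟩ := exists_isEssentialEmbedding_mkQ_comp hj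
  have hsurj : Function.Surjective (N.mkQ ∘ₗ L.mkQ ∘ₗ LinearMap.inl A I A) := by
    rw [← LinearMap.range_eq_top]
    by_contra hne
    refine (Submodule.length_lt hne).not_ge ((hmax _ _ hN).trans ?_)
    exact Module.length_le_of_injective _ (LinearEquiv.ofInjective _ hN.1).injective
  let e := LinearEquiv.ofBijective _ ⟨hN.1, hsurj⟩
  refine ⟨e.symm.toLinearMap ∘ₗ N.mkQ ∘ₗ L.mkQ ∘ₗ LinearMap.inr A I A, fun x hx => ?_⟩
  change e.symm (N.mkQ (L.mkQ (0, x))) = φ ⟨x, hx⟩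
  rw [LinearEquiv.symm_apply_eq]
  change _ = N.mkQ (L.mkQ (φ ⟨x, hx⟩, 0))
  congr 1
  rw [← sub_eq_zero, ← map_sub, Submodule.mkQ_apply, Submodule.Quotient.mk_eq_zero]
  exact ⟨-⟨x, hx⟩, by simp⟩

/-- Over an artin algebra, finitely generated modules embed in finitely generated injectives. -/
theorem exists_finite_injective_extension [IsArtinianRing A] (R : Type*) [CommRing R]
    [IsArtinianRing R] [Algebra R A] [Module.Finite R A] (M : Type u) [AddCommGroup M] [Module A M]
    [Module.Finite A M] :
    ∃ (I : ModuleCat.{u} A) (i : M →ₗ[A] I), Function.Injective i ∧ Module.Finite A I ∧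
      Module.Injective A I := by
  let s : Set ℕ := {n | ∃ (I : ModuleCat.{u} A) (i : M →ₗ[A] I), IsEssentialEmbedding i ∧
    Module.length A I = n}
  let : Module R M := Module.compHom M (algebraMap R A)
  have : IsScalarTower R A M := IsScalarTower.of_algebraMap_smul fun _ _ => rfl
  have : Module.Finite R M := Module.Finite.trans A M
  obtain ⟨c, hc⟩ := ENat.ne_top_iff_exists.1
    (WithTop.mul_ne_top (Module.length_ne_top (R := A) (M := A))
      (Module.length_ne_top (R := R) (M := M)))
  have hbound : ∀ (I : Type u) [AddCommGroup I] [Module A I] (i : M →ₗ[A] I),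
      IsEssentialEmbedding i → Module.length A I ≤ c := by
    intro I _ _ i hi
    let : Module R I := Module.compHom I (algebraMap R A)
    have : IsScalarTower R A I := IsScalarTower.of_algebraMap_smul fun _ _ => rfl
    rw [hc]
    exact hi.length_le
  obtain ⟨m, hm⟩ := ENat.ne_top_iff_exists.1 (Module.length_ne_top (R := A) (M := M))
  have hs : BddAbove s := ⟨c, by
    rintro n ⟨I, i, hi, hn⟩
    exact_mod_cast hn ▸ hbound I i hi⟩
  obtain ⟨I, i, hi, hI⟩ := Nat.sSup_mem (s := s)
    ⟨m, ModuleCat.of A M, LinearMap.id, ⟨Function.injective_id, fun N hN => by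
      rwa [LinearMap.range_id, disjoint_top] at hN⟩, hm.symm⟩ hs
  have : Module.Finite A I := finite_of_length_ne_top (by rw [hI]; exact ENat.natCast_ne_top _)
  refine ⟨I, i, hi.1, this, injective_of_forall_length_le fun J _ _ _ j hj => ?_⟩
  obtain ⟨k, hk⟩ := ENat.ne_top_iff_exists.1 (Module.length_ne_top (R := A) (M := J))
  rw [hI, ← hk]
  exact_mod_cast le_csSup hs ⟨ModuleCat.of A J, j ∘ₗ i, hj.comp hi, hk.symm⟩

/-- Modules of finite projective dimension embed in Ext-injective ones, with cokernel again of
finite projective dimension. -/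
theorem exists_perpFinPd_extension [IsArtinianRing A] {n : ℕ}
    (happ : ∀ (C : Type u) [AddCommGroup C] [Module A C] [Module.Finite A C],
      HasSpecialApprox A C n)
    {M : Type u} [AddCommGroup M] [Module A M] (hM : FinPd A M)
    (hinj : ∃ (I : ModuleCat.{u} A) (i : M →ₗ[A] I), Function.Injective i ∧ Module.Finite A I ∧
      Module.Injective A I) :
    ∃ (Y X : ModuleCat.{u} A) (f : M →ₗ[A] Y) (g : Y →ₗ[A] X), Function.Injective f ∧
      Function.Exact f g ∧ Function.Surjective g ∧ FinPd A Y ∧ PerpFinPd A Y ∧ FinPd A X := by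
  obtain ⟨I, i, hi, hI, hI'⟩ := hinj
  obtain ⟨X, f, hf, hX, hXn, hker⟩ := happ (I ⧸ LinearMap.range i)
  have hi0 : ∀ m, (LinearMap.range i).mkQ (i m) = 0 := fun m =>
    (Submodule.Quotient.mk_eq_zero _).2 ⟨m, rfl⟩
  let Y := LinearMap.eqLocus ((LinearMap.range i).mkQ ∘ₗ LinearMap.fst A I X)
    (f ∘ₗ LinearMap.snd A I X)
  have hY : ∀ z, z ∈ Y ↔ (LinearMap.range i).mkQ z.1 = f z.2 := fun z => Iff.rfl
  let a : M →ₗ[A] Y := (LinearMap.inl A I X ∘ₗ i).codRestrict Y fun m => by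
    rw [hY]
    exact (hi0 m).trans (map_zero f).symm
  let b : Y →ₗ[A] X := LinearMap.snd A I X ∘ₗ Y.subtype
  let c : LinearMap.ker f →ₗ[A] Y :=
    (LinearMap.inr A I X ∘ₗ (LinearMap.ker f).subtype).codRestrict Y fun x => by
      rw [hY]
      exact (map_zero _).trans x.2.symm
  let d : Y →ₗ[A] I := LinearMap.fst A I X ∘ₗ Y.subtype
  have ha : Function.Injective a := fun x y hxy =>
    hi (congrArg (fun z : Y => (z : I × X).1) hxy)
  have hab : Function.Exact a b := by
    rintro ⟨⟨y, x⟩, hyx⟩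
    constructor
    · rintro (rfl : x = 0)
      obtain ⟨m, rfl⟩ : y ∈ LinearMap.range i := by
        rw [← Submodule.Quotient.mk_eq_zero, ← Submodule.mkQ_apply, (hY _).1 hyx, map_zero]
      exact ⟨m, rfl⟩
    · rintro ⟨m, hm⟩
      exact (congrArg (fun z : Y => (z : I × X).2) hm).symm
  have hb : Function.Surjective b := by
    intro x
    obtain ⟨y, hy⟩ := Submodule.mkQ_surjective _ (f x)
    exact ⟨⟨(y, x), hy⟩, rfl⟩
  have hc : Function.Injective c := fun x y hxy =>
    Subtype.ext (congrArg (fun z : Y => (z : I × X).2) hxy)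
  have hcd : Function.Exact c d := by
    rintro ⟨⟨y, x⟩, hyx⟩
    constructor
    · rintro (rfl : y = 0)
      exact ⟨⟨x, ((hY _).1 hyx).symm.trans (map_zero _)⟩, rfl⟩
    · rintro ⟨x', hx'⟩
      exact (congrArg (fun z : Y => (z : I × X).1) hx').symm
  have hd : Function.Surjective d := by
    intro y
    obtain ⟨x, hx⟩ := hf ((LinearMap.range i).mkQ y)
    exact ⟨⟨(y, x), hx.symm⟩, rfl⟩
  obtain ⟨-, m, hm⟩ := hM
  exact ⟨ModuleCat.of A Y, X, a, b, ha, hab, hb,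
    ⟨(inferInstance : Module.Finite A Y), _, PdLT.middle ha hab hb (hm.mono (le_max_left m n))
      (PdLT.mono hXn (le_max_right m n))⟩,
    PerpFinPd.middle hc hcd hd hker fun _ _ _ _ => ExtOneVanish.of_injective, hX, n, hXn⟩

theorem pdLT_of_forall_indec [IsArtinianRing A] {n : ℕ}
    (h : ∀ M : ModuleCat.{u} A, Indec M → ExtInjInP M → PdLT A M n)
    (Y : Type u) [AddCommGroup Y] [Module A Y] (hY : FinPd A Y) (hY' : PerpFinPd A Y) :
    PdLT A Y n := by
  induction hl : Module.length A Y using WellFoundedLT.induction generalizing Y with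
  | ind l ih =>
  subst hl
  have := hY.1
  by_cases hsub : Subsingleton Y
  · exact pdLT_of_subsingleton n
  by_cases hind : Indec (ModuleCat.of A Y)
  · exact h _ hind (extInjInP_of_finPd_of_perpFinPd hY hY')
  obtain ⟨e, he, he0, he1⟩ : ∃ e : Y →ₗ[A] Y, e ∘ₗ e = e ∧ e ≠ 0 ∧ e ≠ LinearMap.id := by
    by_contra! hcon
    exact hind ⟨hsub, fun e he => or_iff_not_imp_left.2 fun he0 => hcon e he he0⟩
  have he' : ∀ y, e (e y) = e y := LinearMap.congr_fun he
  have hker : LinearMap.ker e ≠ ⊤ := fun htop => he0 (LinearMap.ker_eq_top.1 htop)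
  have hrange : LinearMap.range e ≠ ⊤ := by
    intro htop
    refine he1 (LinearMap.ext fun y => ?_)
    obtain ⟨x, rfl⟩ := LinearMap.range_eq_top.1 htop y
    exact he' x
  have hr : e.rangeRestrict ∘ₗ (LinearMap.range e).subtype = LinearMap.id := by
    ext ⟨_, y, rfl⟩
    exact he' y
  let k : Y →ₗ[A] LinearMap.ker e := (LinearMap.id - e).codRestrict _ fun y => by
    simp [he']
  have hk : k ∘ₗ (LinearMap.ker e).subtype = LinearMap.id := by
    ext ⟨y, hy⟩
    change y - e y = y
    rw [LinearMap.mem_ker.1 hy, sub_zero]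
  refine PdLT.middle (f := (LinearMap.ker e).subtype) (g := e.rangeRestrict)
    (Submodule.subtype_injective _) ?_ e.surjective_rangeRestrict
    (ih _ (Submodule.length_lt hker) _ (hY.of_retract _ _ hk) (hY'.of_retract _ _ hk) rfl)
    (ih _ (Submodule.length_lt hrange) _ (hY.of_retract _ _ hr) (hY'.of_retract _ _ hr) rfl)
  rw [LinearMap.exact_iff, LinearMap.ker_rangeRestrict, Submodule.range_subtype]

/-- A bound for the projective dimension of the Ext-injective modules bounds the projective
dimension of all modules of finite projective dimension. -/
theorem pdLT_of_forall_perpFinPd [IsArtinianRing A] {d n : ℕ}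
    (happ : ∀ (C : Type u) [AddCommGroup C] [Module A C] [Module.Finite A C],
      HasSpecialApprox A C d)
    (hinj : ∀ (M : Type u) [AddCommGroup M] [Module A M] [Module.Finite A M],
      ∃ (I : ModuleCat.{u} A) (i : M →ₗ[A] I), Function.Injective i ∧ Module.Finite A I ∧
        Module.Injective A I)
    (h : ∀ (Y : Type u) [AddCommGroup Y] [Module A Y], FinPd A Y → PerpFinPd A Y → PdLT A Y n)
    (M : Type u) [AddCommGroup M] [Module A M] (hM : FinPd A M) : PdLT A M n := by
  suffices hk : ∀ k, (∀ (M : Type u) [AddCommGroup M] [Module A M], FinPd A M →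
      PdLT A M (n + k)) → ∀ (M : Type u) [AddCommGroup M] [Module A M], FinPd A M →
      PdLT A M n by
    refine hk d (fun M _ _ hM => ?_) M hM
    have := hM.1
    exact ((happ M).pdLT hM).mono (by omega)
  intro k
  induction k with
  | zero => exact fun hk => hk
  | succ k ih =>
    intro hk
    refine ih fun M _ _ hM => ?_
    have := hM.1
    obtain ⟨Y, X, f, g, hf, hfg, hg, hY, hY', hX⟩ := exists_perpFinPd_extension happ hM (hinj M)
    exact PdLT.left hf hfg hg ((h Y hY hY').mono (by omega)) (hk X hX)

theorem projDim_le_iff (M : ModuleCat.{u} A) (n : ℕ) : projDim M ≤ n ↔ pdLE M n := by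
  constructor
  · intro h
    have hne : {d : ℕ∞ | ∃ n : ℕ, d = n ∧ pdLE M n}.Nonempty := by
      by_contra hemp
      rw [projDim, Set.not_nonempty_iff_eq_empty.1 hemp, sInf_empty, top_le_iff] at h
      exact ENat.natCast_ne_top n h
    obtain ⟨k, hk, hM⟩ := csInf_mem hne
    have hkn : k ≤ n := by
      rw [projDim, hk] at h
      exact_mod_cast h
    exact fun i hi => hM i (hkn.trans_lt hi)
  · exact fun h => sInf_le ⟨n, rfl, h⟩

theorem findim_le_iff (n : ℕ) : findim A ≤ n ↔ ∀ M : ModuleCat.{u} A, InP M → pdLE M n := by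
  rw [findim, sSup_le_iff]
  constructor
  · exact fun h M hM => (projDim_le_iff M n).1 (h _ ⟨M, hM, rfl⟩)
  · rintro h _ ⟨M, hM, rfl⟩
    exact (projDim_le_iff M n).2 (h M hM)

/-- The version of the main theorem for left modules. -/
theorem findim_eq_projDim (R : Type*) [CommRing R] [IsArtinianRing R] [Algebra R A]
    [Module.Finite R A] (hcf : ContravariantlyFinite (fun M : ModuleCat.{u} A => InP M))
    {ι : Type u} (F : ι → ModuleCat.{u} A) (hF : IsCompleteExtInjFamily F) :
    findim A = projDim (ModuleCat.of A (DirectSum ι (fun i => ↥(F i)))) := by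
  have : IsArtinianRing A := IsArtinianRing.of_finite R A
  have hsimple : ∀ (S : Type u) [AddCommGroup S] [Module A S], IsSimpleModule A S →
      ∃ n, HasSpecialApprox A S n := by
    intro S _ _ _
    obtain ⟨X, f, hX, hf⟩ := hcf (ModuleCat.of A S) (inferInstance : Module.Finite A S)
    exact hasSpecialApprox_of_rightApprox ⟨X, f, (inP_iff_finPd X).1 hX,
      fun Z _ _ hZ => hf (ModuleCat.of A Z) ((inP_iff_finPd _).2 hZ)⟩
  obtain ⟨d, happ⟩ := exists_forall_hasSpecialApprox hsimple
  have key : ∀ n : ℕ, findim A ≤ n ↔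
      projDim (ModuleCat.of A (DirectSum ι (fun i => ↥(F i)))) ≤ n := by
    intro n
    rw [findim_le_iff, projDim_le_iff, pdLE_iff_hasProjectiveDimensionLT]
    constructor
    · exact fun h => pdLT_dfinsupp n (fun i => F i) fun i =>
        (pdLE_iff_hasProjectiveDimensionLT (F i) n).1 (h _ (hF.1 i).2.1)
    · intro h M hM
      rw [pdLE_iff_hasProjectiveDimensionLT]
      refine pdLT_of_forall_perpFinPd happ (fun M _ _ _ => exists_finite_injective_extension R M)
        (pdLT_of_forall_indec fun N hN hN' => ?_) M ((inP_iff_finPd M).1 hM)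
      obtain ⟨i, ⟨e⟩⟩ := hF.2.1 N hN hN'
      classical
      refine PdLT.of_retract h (DirectSum.lof A ι (fun i => ↥(F i)) i ∘ₗ e.toLinearMap)
        (e.symm.toLinearMap ∘ₗ DirectSum.component A ι (fun i => ↥(F i)) i) ?_
      ext x
      simp [DirectSum.component.lof_self]
  refine eq_of_forall_ge_iff fun c => ?_
  induction c using ENat.recTopCoe with
  | top => simp
  | coe n => exact key n

end ArtinTilting

/-- If `𝒫` is contravariantly finite and `E` is the direct sum of the
indecomposable Ext-injective modules in `𝒫`, then `findim Λ = pd E`. -/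
theorem stmt_10 (Λ : Type u) [Ring Λ] (R : Type u) [CommRing R] [IsArtinianRing R]
    [Algebra R Λ] [Module.Finite R Λ]
    (hcf : ContravariantlyFinite (fun M : ModuleCat.{u} Λᵐᵒᵖ => InP M))
    {ι : Type u} (F : ι → ModuleCat.{u} Λᵐᵒᵖ) (hF : IsCompleteExtInjFamily F) :
    findim Λᵐᵒᵖ = projDim (ModuleCat.of Λᵐᵒᵖ (DirectSum ι (fun i => ↥(F i)))) := by
  exact ArtinTilting.findim_eq_projDim R hcf F hF
end
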